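/- arXiv:1202.4803 — 7 statements merged into one kernel-verified Lean document; each statement's English description precedes it below -/
import Mathlib

section
/- Let 𝒜 be an abelian category and 𝒞 a full subcategory of 𝒜 which is closed under extensions and cokernels. Then an object I ∈ 𝒞 is 𝒞-split injective if and only if it is 𝒞-Ext injective. -/
/-!
STATEMENT 1: Let 𝒜 be an abelian category and 𝒞 a full subcategory of 𝒜 closed under
extensions and cokernels.  Then an object `I ∈ 𝒞` is 𝒞-split injective (every monomorphism
`I → M` in 𝒜 with `M ∈ 𝒞` splits) if and only if it is 𝒞-Ext injective
(`Ext¹_𝒜(X, I) = 0` for all `X ∈ 𝒞`).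
-/

open CategoryTheory CategoryTheory.Limits

universe w v u

variable {𝒜 : Type u} [Category.{v} 𝒜] [Abelian 𝒜]

/-- A subcategory is closed under extensions if for every short exact sequence
`0 → X₁ → X₂ → X₃ → 0` with `X₁` and `X₃` in it, `X₂` is in it. -/
def ClosedUnderExtensions (N : Set 𝒜) : Prop :=
  ∀ S : ShortComplex 𝒜, S.ShortExact → S.X₁ ∈ N → S.X₃ ∈ N → S.X₂ ∈ N

/-- A subcategory is closed under cokernels if the cokernel of any map between its objects
belongs to it. -/
def ClosedUnderCokernels (N : Set 𝒜) : Prop :=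
  ∀ ⦃X Y : 𝒜⦄ (f : X ⟶ Y), X ∈ N → Y ∈ N → cokernel f ∈ N

namespace CochainComplex

variable {C : Type*} [Category* C] [Abelian C]

/-- A quasi-isomorphism to a single complex is an epimorphism in the degree of the latter. -/
lemma epi_f_of_quasiIso_single {K : CochainComplex C ℤ} {X : C} {n : ℤ}
    (s : K ⟶ (HomologicalComplex.single C (ComplexShape.up ℤ) n).obj X) [QuasiIso s] :
    Epi (s.f n) := by
  have := HomologicalComplex.isIso_homologyπ
    ((HomologicalComplex.single C (ComplexShape.up ℤ) n).obj X) (n - 1) n (by simp) (by simp)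
  have := HomologicalComplex.isIso_iCycles
    ((HomologicalComplex.single C (ComplexShape.up ℤ) n).obj X) n (n + 1) (by simp) (by simp)
  have hπ : Epi (HomologicalComplex.cyclesMap s n ≫ HomologicalComplex.homologyπ _ n) := by
    rw [← HomologicalComplex.homologyπ_naturality]
    infer_instance
  have hcycles : Epi (HomologicalComplex.cyclesMap s n) := by
    have := epi_comp (HomologicalComplex.cyclesMap s n ≫ HomologicalComplex.homologyπ _ n)
      (inv (HomologicalComplex.homologyπ _ n))
    simpa using this
  have hi : Epi (K.iCycles n ≫ s.f n) := by
    rw [← HomologicalComplex.cyclesMap_i]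
    infer_instance
  exact epi_of_epi (K.iCycles n) (s.f n)

end CochainComplex

namespace DerivedCategory

variable {C : Type*} [Category* C] [Abelian C] [HasDerivedCategory C]

/-- A morphism in the derived category from an object in degree `0` to a complex whose term in
degree `0` vanishes is killed by precomposition with an epimorphism. -/
lemma exists_epi_singleFunctor_map_comp_eq_zero {X : C} {L : CochainComplex C ℤ}
    (hL : IsZero (L.X 0)) (f : (singleFunctor C 0).obj X ⟶ Q.obj L) :
    ∃ (P : C) (p : P ⟶ X), Epi p ∧ (singleFunctor C 0).map p ≫ f = 0 := by
  obtain ⟨K, _, s, hs, g, hf⟩ := right_fac_of_isStrictlyLE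
    (X := (HomologicalComplex.single C (ComplexShape.up ℤ) 0).obj X) (Y := L) f 0
  have : QuasiIso s := (isIso_Q_map_iff_quasiIso C s).1 hs
  have : Epi (s.f 0) := CochainComplex.epi_f_of_quasiIso_single s
  let p : K.X 0 ⟶ X :=
    s.f 0 ≫ (HomologicalComplex.singleObjXSelf (ComplexShape.up ℤ) 0 X).hom
  let u : (HomologicalComplex.single C (ComplexShape.up ℤ) 0).obj (K.X 0) ⟶ K :=
    HomologicalComplex.mkHomFromSingle (𝟙 _) (fun k hk ↦
      (K.isZero_of_isStrictlyLE 0 k (by simp at hk; lia)).eq_of_tgt _ _)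
  have hus : u ≫ s = (HomologicalComplex.single C (ComplexShape.up ℤ) 0).map p := by
    apply HomologicalComplex.from_single_hom_ext
    simp [u, p, HomologicalComplex.single_map_f_self]
  have hug : u ≫ g = 0 := HomologicalComplex.from_single_hom_ext (hL.eq_of_tgt _ _)
  refine ⟨K.X 0, p, epi_comp _ _, ?_⟩
  change Q.map ((HomologicalComplex.single C (ComplexShape.up ℤ) 0).map p) ≫ f = 0
  rw [← hus, hf, Functor.map_comp, Category.assoc, IsIso.hom_inv_id_assoc, ← Functor.map_comp,
    hug, Functor.map_zero]

end DerivedCategory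

namespace CategoryTheory

variable {C : Type*} [Category* C] [Abelian C]

/-- `Ext` in positive degrees is effaceable in the first variable. -/
lemma Abelian.Ext.exists_epi_mk₀_comp_eq_zero [HasExt.{w} C] {X Y : C} {n : ℕ} (hn : n ≠ 0)
    (e : Ext X Y n) :
    ∃ (P : C) (p : P ⟶ X), Epi p ∧ (mk₀ p).comp e (zero_add n) = 0 := by
  let := HasDerivedCategory.standard C
  let K := (HomologicalComplex.single C (ComplexShape.up ℤ) 0).obj Y
  let i : ((DerivedCategory.singleFunctor C 0).obj Y)⟦(n : ℤ)⟧ ≅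
      DerivedCategory.Q.obj (K⟦(n : ℤ)⟧) :=
    ((DerivedCategory.Q.commShiftIso (n : ℤ)).app K).symm
  have hK : IsZero ((K⟦(n : ℤ)⟧).X 0) :=
    HomologicalComplex.isZero_single_obj_X (ComplexShape.up ℤ) 0 Y _ (by simpa using hn)
  obtain ⟨P, p, hp, h⟩ :=
    DerivedCategory.exists_epi_singleFunctor_map_comp_eq_zero hK (e.hom ≫ i.hom)
  refine ⟨P, p, hp, ?_⟩
  ext
  rw [← Category.assoc] at h
  simpa [ShiftedHom.mk₀_comp] using zero_of_comp_mono i.hom h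

/-- The pushout of a short exact sequence along a morphism from its first term. -/
lemma ShortComplex.ShortExact.exists_pushout {S : ShortComplex C} (hS : S.ShortExact) {Y : C}
    (φ : S.X₁ ⟶ Y) :
    ∃ (M : C) (i : Y ⟶ M) (q : M ⟶ S.X₃) (j : S.X₂ ⟶ M) (w : i ≫ q = 0),
      (ShortComplex.mk i q w).ShortExact ∧ S.f ≫ j = φ ≫ i := by
  have := hS.mono_f
  have := hS.epi_g
  let q : pushout S.f φ ⟶ S.X₃ := pushout.desc S.g 0 (by simp)
  have hq : pushout.inl S.f φ ≫ q = S.g := pushout.inl_desc _ _ _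
  have w : pushout.inr S.f φ ≫ q = 0 := pushout.inr_desc _ _ _
  have : Epi q := epi_of_epi_fac hq
  refine ⟨_, pushout.inr S.f φ, q, pushout.inl S.f φ, w, ?_, pushout.condition⟩
  refine { exact := ShortComplex.exact_of_g_is_cokernel _ ?_ }
  have hk {T : C} (k : pushout S.f φ ⟶ T) (hk : pushout.inr S.f φ ≫ k = 0) :
      S.f ≫ pushout.inl S.f φ ≫ k = 0 := by
    rw [pushout.condition_assoc, hk, comp_zero]
  refine CokernelCofork.IsColimit.ofπ _ _ (fun k h ↦ hS.exact.desc _ (hk k h)) ?_ ?_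
  · intro T k h
    apply pushout.hom_ext
    · rw [reassoc_of% hq, hS.exact.g_desc]
    · rw [reassoc_of% w, zero_comp, h]
  · intro T k h m hm
    rw [← cancel_epi q, hm]
    apply pushout.hom_ext
    · rw [reassoc_of% hq, hS.exact.g_desc]
    · rw [reassoc_of% w, zero_comp, h]

/-- A class in `Ext¹` vanishes as soon as every extension of the given objects splits. -/
lemma Abelian.Ext.eq_zero_of_forall_shortExact_split [HasExt.{w} C] {X Y : C}
    (hsplit : ∀ (M : C) (i : Y ⟶ M) (q : M ⟶ X) (w : i ≫ q = 0),
      (ShortComplex.mk i q w).ShortExact → ∃ r : M ⟶ Y, i ≫ r = 𝟙 Y)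
    (e : Ext X Y 1) : e = 0 := by
  obtain ⟨P, p, _, hp⟩ := exists_epi_mk₀_comp_eq_zero one_ne_zero e
  have hS : (ShortComplex.mk _ _ (kernel.condition p)).ShortExact :=
    { exact := ShortComplex.exact_kernel p }
  obtain ⟨x, rfl⟩ := contravariant_sequence_exact₃ hS Y e hp (add_zero 1)
  obtain ⟨φ, rfl⟩ := mk₀_bijective _ _ |>.2 x
  obtain ⟨M, i, q, j, w, hM, hj⟩ := hS.exists_pushout φ
  obtain ⟨r, hr⟩ := hsplit M i q w hM
  have hφ : φ = kernel.ι p ≫ j ≫ r := by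
    rw [reassoc_of% hj, hr, Category.comp_id]
  rw [hφ, ← mk₀_comp_mk₀]
  exact hS.extClass_comp_assoc _

/-- A short exact sequence with vanishing class in `Ext¹` splits. -/
lemma ShortComplex.ShortExact.exists_retraction_of_extClass_eq_zero [HasExt.{w} C]
    {S : ShortComplex C} (hS : S.ShortExact) (h : hS.extClass = 0) :
    ∃ r : S.X₂ ⟶ S.X₁, S.f ≫ r = 𝟙 S.X₁ := by
  obtain ⟨x, hx⟩ := Abelian.Ext.contravariant_sequence_exact₁ hS S.X₁
    (Abelian.Ext.mk₀ (𝟙 S.X₁)) (add_zero 1) (by simpa using h)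
  obtain ⟨r, rfl⟩ := Abelian.Ext.mk₀_bijective _ _ |>.2 x
  rw [Abelian.Ext.mk₀_comp_mk₀] at hx
  exact ⟨r, Abelian.Ext.mk₀_bijective _ _ |>.1 hx⟩

end CategoryTheory

theorem splitInjective_iff_extInjective [HasExt.{w} 𝒜]
    (𝒞 : Set 𝒜) (hext : ClosedUnderExtensions 𝒞) (hcoker : ClosedUnderCokernels 𝒞)
    (I : 𝒜) (hI : I ∈ 𝒞) :
    (∀ M ∈ 𝒞, ∀ f : I ⟶ M, Mono f → ∃ r : M ⟶ I, f ≫ r = 𝟙 I) ↔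
      (∀ X ∈ 𝒞, ∀ e : Abelian.Ext X I 1, e = 0) := by
  constructor
  · intro h X hX e
    exact Abelian.Ext.eq_zero_of_forall_shortExact_split
      (fun M i q w hM ↦ h M (hext _ hM hI hX) i hM.mono_f) e
  · intro h M hM f _
    have hS : (ShortComplex.mk _ _ (cokernel.condition f)).ShortExact :=
      { exact := ShortComplex.exact_cokernel f }
    exact hS.exists_retraction_of_extClass_eq_zero (h _ (hcoker f hI hM) _)
end

section
/- Let 𝒜 be a hereditary abelian category and 𝒩 a narrow subcategory of 𝒜. Then 𝒩 is closed under images: for any morphism f : A → B with A, B ∈ 𝒩, the image of f lies in 𝒩. -/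
/-!
STATEMENT 2: Let 𝒜 be a hereditary abelian category and 𝒩 a narrow subcategory of 𝒜
(a full subcategory closed under extensions and cokernels).  Then 𝒩 is closed under images:
for any morphism `f : A ⟶ B` with `A, B ∈ 𝒩`, the image of `f` lies in 𝒩.
-/

open CategoryTheory CategoryTheory.Limits

universe w v u

variable {𝒜 : Type u} [Category.{v} 𝒜] [Abelian 𝒜]

/-- A subcategory (given by its set of objects) is replete, i.e. closed under isomorphisms. -/
def Replete (N : Set 𝒜) : Prop := ∀ ⦃X Y : 𝒜⦄, X ∈ N → (X ≅ Y) → Y ∈ N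

/-- A subcategory is closed under kernels if the kernel of any map between its objects
belongs to it. -/
def ClosedUnderKernels (N : Set 𝒜) : Prop :=
  ∀ ⦃X Y : 𝒜⦄ (f : X ⟶ Y), X ∈ N → Y ∈ N → kernel f ∈ N

/-- A narrow subcategory: a (replete) full subcategory closed under extensions and cokernels. -/
def IsNarrow (N : Set 𝒜) : Prop :=
  Replete N ∧ ClosedUnderExtensions N ∧ ClosedUnderCokernels N

variable [HasExt.{w} 𝒜]

/-- An abelian category is hereditary if `Ext²(A, B) = 0` for all objects `A`, `B`
(equivalently, it has global dimension at most one). -/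
def Hereditary : Prop := ∀ ⦃X Y : 𝒜⦄ (e : Abelian.Ext X Y 2), e = 0

section Derived

open DerivedCategory Pretriangulated

/-- A distinguished triangle in the derived category whose vertices are single complexes in
degree zero comes from a short exact sequence. -/
lemma shortExact_of_singleFunctor_distinguished {C : Type*} [Category* C] [Abelian C]
    [HasDerivedCategory C] (S : ShortComplex C)
    (h : (singleFunctor C 0).obj S.X₃ ⟶ ((singleFunctor C 0).obj S.X₁)⟦(1 : ℤ)⟧)
    (hT : Triangle.mk ((singleFunctor C 0).map S.f) ((singleFunctor C 0).map S.g) h ∈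
      distTriang (DerivedCategory C)) :
    S.ShortExact := by
  let e := singleFunctorCompHomologyFunctorIso C 0
  have exact₂ := HomologySequence.exact₂ _ hT 0
  have mono_f := (HomologySequence.mono_homologyMap_mor₁_iff _ hT (-1) 0).2
    ((isZero_of_isGE ((singleFunctor C 0).obj S.X₃) 0 (-1) (by lia)).eq_of_src _ _)
  have epi_g := (HomologySequence.epi_homologyMap_mor₂_iff _ hT 0 1).2
    ((isZero_of_isLE ((singleFunctor C 0).obj S.X₁) 0 1 (by lia)).eq_of_tgt _ _)
  exact (ShortComplex.shortExact_iff_of_iso (ShortComplex.isoMk (e.app _) (e.app _) (e.app _)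
    (e.hom.naturality S.f).symm (e.hom.naturality S.g).symm)).1
    { exact := exact₂, mono_f := mono_f, epi_g := epi_g }

/-- Every extension class `x` of `S.X₃` by `A` which is sent by `p : A ⟶ S.X₁` to the class of
the short exact sequence `S` is realized by a short exact sequence mapping to `S`, with
component `p` on the left and the identity on the right. -/
lemma exists_shortExact_of_extClass_eq {C : Type*} [Category* C] [Abelian C] [HasExt.{w} C]
    {S : ShortComplex C} (hS : S.ShortExact) {A : C} (p : A ⟶ S.X₁) (x : Abelian.Ext S.X₃ A 1)
    (hx : x.comp (Abelian.Ext.mk₀ p) (add_zero 1) = hS.extClass) :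
    ∃ (E : C) (a : A ⟶ E) (b : E ⟶ S.X₃) (zero : a ≫ b = 0) (g : E ⟶ S.X₂),
      (ShortComplex.mk a b zero).ShortExact ∧ a ≫ g = p ≫ S.f ∧ g ≫ S.g = b := by
  let := HasDerivedCategory.standard C
  let F := singleFunctor C 0
  obtain ⟨Y, α, β, hT⟩ := distinguished_cocone_triangle₂ (X := F.obj A) (Z := F.obj S.X₃) x.hom
  have : Y.IsGE 0 := (isGE_iff Y 0).2 fun i hi ↦
    (HomologySequence.exact₂ _ hT i).isZero_X₂
      ((isZero_of_isGE (F.obj A) 0 i hi).eq_of_src _ _)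
      ((isZero_of_isGE (F.obj S.X₃) 0 i hi).eq_of_tgt _ _)
  have : Y.IsLE 0 := (isLE_iff Y 0).2 fun i hi ↦
    (HomologySequence.exact₂ _ hT i).isZero_X₂
      ((isZero_of_isLE (F.obj A) 0 i hi).eq_of_src _ _)
      ((isZero_of_isLE (F.obj S.X₃) 0 i hi).eq_of_tgt _ _)
  obtain ⟨E, ⟨e⟩⟩ := exists_iso_singleFunctor_obj_of_isGE_of_isLE Y 0
  obtain ⟨a, ha⟩ := F.map_surjective (α ≫ e.hom)
  obtain ⟨b, hb⟩ := F.map_surjective (e.inv ≫ β)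
  have hT' : Triangle.mk (F.map a) (F.map b) x.hom ∈ distTriang (DerivedCategory C) :=
    isomorphic_distinguished _ hT _ (Triangle.isoMk _ _ (Iso.refl _) e.symm (Iso.refl _)
      (show F.map a ≫ e.inv = 𝟙 (F.obj A) ≫ α by simp [ha])
      (show F.map b ≫ 𝟙 (F.obj S.X₃) = e.inv ≫ β by simp [hb])
      (show x.hom ≫ (𝟙 (F.obj A))⟦(1 : ℤ)⟧' = 𝟙 (F.obj S.X₃) ≫ x.hom by
        rw [CategoryTheory.Functor.map_id, Category.id_comp]
        exact Category.comp_id x.hom))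
  have zero : a ≫ b = 0 := F.map_injective (by
    rw [F.map_comp, F.map_zero]
    exact comp_distTriang_mor_zero₁₂ _ hT')
  obtain ⟨γ, hγ₁, hγ₂⟩ : ∃ γ : F.obj E ⟶ F.obj S.X₂,
      F.map a ≫ γ = F.map p ≫ F.map S.f ∧ F.map b ≫ 𝟙 (F.obj S.X₃) = γ ≫ F.map S.g :=
    complete_distinguished_triangle_morphism₂ _ _ hT'
      hS.singleTriangle_distinguished (F.map p) (𝟙 _) (by
      have := congr_arg Abelian.Ext.hom hx
      rw [← Abelian.Ext.hom_comp_singleFunctor_map_shift, hS.extClass_hom] at this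
      exact this.trans (Category.id_comp _).symm)
  obtain ⟨g, rfl⟩ := F.map_surjective γ
  refine ⟨E, a, b, zero, g, shortExact_of_singleFunctor_distinguished (.mk a b zero) _ hT',
    F.map_injective ?_, F.map_injective ?_⟩
  · simpa using hγ₁
  · simpa using hγ₂.symm

end Derived

/-- A morphism of short exact sequences which is the identity on the right gives a short exact
sequence `0 ⟶ A ⟶ E ⊞ S.X₁ ⟶ S.X₂ ⟶ 0`. -/
lemma shortExact_biprod_of_hom {C : Type*} [Category* C] [Abelian C]
    {S : ShortComplex C} (hS : S.ShortExact) {A E : C} {p : A ⟶ S.X₁} {a : A ⟶ E} {b : E ⟶ S.X₃}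
    {zero : a ≫ b = 0} {g : E ⟶ S.X₂} (hE : (ShortComplex.mk a b zero).ShortExact)
    (sq : CommSq a p g S.f) (hg : g ≫ S.g = b) :
    sq.shortComplex.ShortExact := by
  have := hS.mono_f
  have : Mono a := hE.mono_f
  have : Epi b := hE.epi_g
  have mono : Mono sq.shortComplex.f := by
    have : Mono (biprod.lift a (-p) ≫ biprod.fst) := by simpa
    exact mono_of_mono (biprod.lift a (-p)) biprod.fst
  have epi : Epi sq.shortComplex.g := by
    refine Preadditive.epi_of_cancel_zero _ fun {Z} z hz ↦ ?_
    change S.X₂ ⟶ Z at z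
    change biprod.desc g S.f ≫ z = 0 at hz
    have hgz : g ≫ z = 0 := by simpa using biprod.inl ≫= hz
    have hfz : S.f ≫ z = 0 := by simpa using biprod.inr ≫= hz
    have := hS.epi_g
    have hd := hS.exact.g_desc z hfz
    rw [← hd, ← Category.assoc, hg] at hgz
    have hz' : z = 0 := by rw [← hd, zero_of_epi_comp b hgz, comp_zero]
    exact hz'
  refine { exact := ?_ }
  rw [ShortComplex.exact_iff_exact_up_to_refinements]
  intro T x hx
  change T ⟶ E ⊞ S.X₁ at x
  change x ≫ biprod.desc g S.f = 0 at hx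
  have hsum : (x ≫ biprod.fst) ≫ g + (x ≫ biprod.snd) ≫ S.f = 0 := by
    simpa [biprod.desc_eq] using hx
  have hxb : (x ≫ biprod.fst) ≫ b = 0 := by
    simpa [hg] using hsum =≫ S.g
  obtain ⟨l, hl⟩ : ∃ l : T ⟶ A, l ≫ a = x ≫ biprod.fst := ⟨_, hE.exact.lift_f _ hxb⟩
  refine ⟨T, 𝟙 T, inferInstance, l, ?_⟩
  change 𝟙 T ≫ x = l ≫ biprod.lift a (-p)
  rw [Category.id_comp]
  apply biprod.hom_ext
  · simpa using hl.symm
  · rw [← cancel_mono S.f]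
    rw [← hl, Category.assoc, sq.w] at hsum
    simpa using eq_neg_of_add_eq_zero_right hsum

/-- A replete subcategory closed under cokernels is closed under direct summands. -/
lemma ClosedUnderCokernels.snd_mem_of_biprod_mem {C : Type*} [Category* C] [Abelian C]
    {N : Set C} (hN : ClosedUnderCokernels N) (hN' : Replete N) {X Y : C} (h : (X ⊞ Y) ∈ N) :
    Y ∈ N := by
  let φ : X ⊞ Y ⟶ X ⊞ Y := biprod.fst ≫ biprod.inl
  refine hN' (hN φ h h)
    { hom := cokernel.desc φ biprod.snd (by simp [φ])
      inv := biprod.inr ≫ cokernel.π φ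
      hom_inv_id := ?_
      inv_hom_id := by simp }
  have hφ : biprod.inl ≫ cokernel.π φ = 0 := by
    simpa only [φ, Category.assoc, biprod.inl_fst_assoc, comp_zero] using
      biprod.inl ≫= cokernel.condition φ
  ext
  · simp [hφ]
  · simp

theorem narrow_closed_under_images
    (hher : Hereditary (𝒜 := 𝒜)) (𝒩 : Set 𝒜) (h𝒩 : IsNarrow 𝒩)
    {A B : 𝒜} (f : A ⟶ B) (hA : A ∈ 𝒩) (hB : B ∈ 𝒩) :
    image f ∈ 𝒩 := by
  obtain ⟨hrep, hext, hcok⟩ := h𝒩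
  have hS : (ShortComplex.mk (image.ι f) (cokernel.π (image.ι f))
      (cokernel.condition _)).ShortExact :=
    { exact := ShortComplex.exact_cokernel _ }
  have hK : (ShortComplex.mk (kernel.ι (factorThruImage f)) (factorThruImage f)
      (kernel.condition _)).ShortExact :=
    { exact := ShortComplex.exact_kernel _ }
  obtain ⟨x, hx⟩ := Abelian.Ext.covariant_sequence_exact₃ _ hK hS.extClass rfl (hher _)
  obtain ⟨E, a, b, zero, g, hE, hag, hgb⟩ :=
    exists_shortExact_of_extClass_eq hS (factorThruImage f) x hx
  exact hcok.snd_mem_of_biprod_mem hrep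
    (hext _ (shortExact_biprod_of_hom hS hE ⟨hag⟩ hgb) hA hB)
end

section
/- Let 𝒜 be a hereditary abelian category and 𝒩 a narrow subcategory of 𝒜. Let f : X → Y be a morphism between objects of 𝒩 with kernel K. Then for any object X′ ∈ 𝒩 and any morphism g : K → X′, the cokernel of g lies in 𝒩. -/
/-!
STATEMENT 3: Let 𝒜 be a hereditary abelian category and 𝒩 a narrow subcategory of 𝒜.
Let `f : X ⟶ Y` be a morphism between objects of 𝒩 with kernel `K`.  Then for any object
`X' ∈ 𝒩` and any morphism `g : K ⟶ X'`, the cokernel of `g` lies in 𝒩.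
-/

open CategoryTheory CategoryTheory.Limits

universe w v u

variable {𝒜 : Type u} [Category.{v} 𝒜] [Abelian 𝒜]

variable [HasExt.{w} 𝒜]

open Abelian

/-- If `s : Z ⟶ A` is a quasi-isomorphism to an object placed in degree `0`, then the inclusion of
the cycles of `Z` in degree `0` lifts an epimorphism to `A` along `s`. -/
theorem exists_epi_single_map_eq_comp {C : Type u} [Category.{v} C] [Abelian C]
    {Z : CochainComplex C ℤ} {A : C}
    (s : Z ⟶ (HomologicalComplex.single C (ComplexShape.up ℤ) 0).obj A) (hs : QuasiIso s) :
    ∃ (A' : C) (p : A' ⟶ A) (t : (HomologicalComplex.single C (ComplexShape.up ℤ) 0).obj A' ⟶ Z),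
      Epi p ∧ t ≫ s = (HomologicalComplex.single C (ComplexShape.up ℤ) 0).map p := by
  refine ⟨Z.cycles 0, HomologicalComplex.cyclesMap s 0 ≫
    (HomologicalComplex.singleObjCyclesSelfIso (ComplexShape.up ℤ) 0 A).hom,
    HomologicalComplex.mkHomFromSingle (Z.iCycles 0) (by simp), ?_, ?_⟩
  · let π := ((HomologicalComplex.single C (ComplexShape.up ℤ) 0).obj A).homologyπ 0
    have : IsIso π := by
      apply HomologicalComplex.isIso_homologyπ _ (-1) 0 (by simp)
      exact (HomologicalComplex.isZero_single_obj_X _ _ _ _ (by simp)).eq_of_src _ _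
    have : Epi (HomologicalComplex.cyclesMap s 0 ≫ π) := by
      rw [← HomologicalComplex.homologyπ_naturality s 0]
      infer_instance
    have : Epi (HomologicalComplex.cyclesMap s 0) := by
      rwa [← epi_comp_iff_of_isIso _ π]
    infer_instance
  · apply HomologicalComplex.from_single_hom_ext
    simp [HomologicalComplex.single_map_f_self,
      HomologicalComplex.singleObjCyclesSelfIso]

/-- Classes in `Ext¹` are effaceable: each one vanishes after pulling back along some
epimorphism. -/
theorem exists_epi_mk₀_comp_eq_zero {A B : 𝒜} (α : Ext A B 1) :
    ∃ (A' : 𝒜) (p : A' ⟶ A), Epi p ∧ (Ext.mk₀ p).comp α (zero_add 1) = 0 := by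
  let := HasDerivedCategory.standard 𝒜
  let e := ((DerivedCategory.singleFunctors 𝒜).shiftIso 1 (-1) 0 (by simp)).app B
  let φ : DerivedCategory.Q.obj ((HomologicalComplex.single 𝒜 (ComplexShape.up ℤ) 0).obj A) ⟶
    DerivedCategory.Q.obj ((HomologicalComplex.single 𝒜 (ComplexShape.up ℤ) (-1)).obj B) :=
    α.hom ≫ e.hom
  obtain ⟨Z, s, hs, g, hφ⟩ := DerivedCategory.right_fac φ
  rw [DerivedCategory.isIso_Q_map_iff_quasiIso] at hs
  obtain ⟨A', p, t, hp, hts⟩ := exists_epi_single_map_eq_comp s hs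
  refine ⟨A', p, hp, ?_⟩
  have htg : t ≫ g = 0 := by
    apply HomologicalComplex.from_single_hom_ext
    exact (HomologicalComplex.isZero_single_obj_X _ _ _ _ (by simp)).eq_of_tgt _ _
  have hpφ : (DerivedCategory.singleFunctor 𝒜 0).map p ≫ φ = 0 := by
    change DerivedCategory.Q.map
      ((HomologicalComplex.single 𝒜 (ComplexShape.up ℤ) 0).map p) ≫ φ = 0
    rw [← hts, hφ, Functor.map_comp, Category.assoc, IsIso.hom_inv_id_assoc,
      ← Functor.map_comp, htg, Functor.map_zero]
  ext
  rw [Ext.comp_hom, Ext.mk₀_hom, ShiftedHom.mk₀_comp, Ext.zero_hom, ← cancel_mono e.hom]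
  rw [zero_comp, Category.assoc]
  exact hpφ

/-- The pushout of a short exact sequence along a morphism out of its first term is a short exact
sequence with the same last term. -/
theorem exists_shortExact_of_isPushout {C : Type u} [Category.{v} C] [Abelian C]
    {A B E B' E' : C} {i : B ⟶ E} {q : E ⟶ A} {w : i ≫ q = 0}
    (hS : (ShortComplex.mk i q w).ShortExact) {u : B ⟶ B'} {r : E ⟶ E'} {i' : B' ⟶ E'}
    (sq : IsPushout i u r i') :
    ∃ (q' : E' ⟶ A) (w' : i' ≫ q' = 0), (ShortComplex.mk i' q' w').ShortExact ∧ r ≫ q' = q := by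
  have : Mono i := hS.mono_f
  have : Epi q := hS.epi_g
  have hq : i ≫ q = u ≫ 0 := w.trans comp_zero.symm
  have : Epi (sq.desc q 0 hq) := epi_of_epi_fac (sq.inl_desc _ _ _)
  have : Mono i' := (MorphismProperty.monomorphisms C).of_isPushout sq.flip ‹Mono i›
  refine ⟨sq.desc q 0 hq, sq.inr_desc _ _ _, ⟨?_⟩, sq.inl_desc _ _ _⟩
  refine ShortComplex.exact_of_g_is_cokernel _ (CokernelCofork.IsColimit.ofπ' _ _ fun k hk ↦ ?_)
  have hk' : i ≫ r ≫ k = 0 := by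
    rw [sq.w_assoc]
    exact hk ▸ comp_zero
  refine ⟨hS.exact.desc (r ≫ k) hk', sq.hom_ext ?_ ?_⟩
  · rw [sq.inl_desc_assoc]
    exact hS.exact.g_desc _ _
  · rw [sq.inr_desc_assoc, zero_comp]
    exact hk.symm

/-- Pushing out a short exact sequence along `u` composes its class in `Ext¹` with `u`. -/
theorem extClass_of_comm {A B E B' E' : 𝒜} {i : B ⟶ E} {q : E ⟶ A} {w : i ≫ q = 0}
    (h : (ShortComplex.mk i q w).ShortExact) {i' : B' ⟶ E'} {q' : E' ⟶ A} {w' : i' ≫ q' = 0}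
    (h' : (ShortComplex.mk i' q' w').ShortExact) {u : B ⟶ B'} {r : E ⟶ E'}
    (hu : u ≫ i' = i ≫ r) (hr : r ≫ q' = q) :
    h.extClass.comp (Ext.mk₀ u) (add_zero 1) = h'.extClass := by
  let F : ShortComplex.mk i q w ⟶ ShortComplex.mk i' q' w' :=
    { τ₁ := u, τ₂ := r, τ₃ := 𝟙 A, comm₁₂ := hu, comm₂₃ := by simpa using hr }
  simpa [F] using ShortComplex.ShortExact.extClass_naturality h h' F

/-- Every class in `Ext¹` is the class of a short exact sequence. -/
theorem exists_shortExact_extClass_eq {A B : 𝒜} (α : Ext A B 1) :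
    ∃ (E : 𝒜) (i : B ⟶ E) (q : E ⟶ A) (w : i ≫ q = 0)
      (h : (ShortComplex.mk i q w).ShortExact), h.extClass = α := by
  obtain ⟨A', p, _, hp⟩ := exists_epi_mk₀_comp_eq_zero α
  have hS : (ShortComplex.mk (kernel.ι p) p (kernel.condition p)).ShortExact :=
    { exact := ShortComplex.exact_kernel p }
  obtain ⟨x, hx⟩ := Ext.contravariant_sequence_exact₃ hS B α hp (add_zero 1)
  obtain ⟨u, rfl⟩ := (Ext.mk₀_bijective _ _).2 x
  have sq := IsPushout.of_hasPushout (kernel.ι p) u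
  obtain ⟨q, w, h, hr⟩ := exists_shortExact_of_isPushout hS sq
  exact ⟨_, _, q, w, h, (extClass_of_comm hS h sq.w.symm hr).symm.trans hx⟩

/-- Extensions of `A` by `B` with the same class in `Ext¹` have isomorphic middle terms. -/
theorem nonempty_iso_of_extClass_eq {A B E₁ E₂ : 𝒜} {i₁ : B ⟶ E₁} {q₁ : E₁ ⟶ A} {w₁ : i₁ ≫ q₁ = 0}
    {i₂ : B ⟶ E₂} {q₂ : E₂ ⟶ A} {w₂ : i₂ ≫ q₂ = 0}
    (h₁ : (ShortComplex.mk i₁ q₁ w₁).ShortExact) (h₂ : (ShortComplex.mk i₂ q₂ w₂).ShortExact)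
    (h : h₁.extClass = h₂.extClass) : Nonempty (E₁ ≅ E₂) := by
  have := h₂.mono_f
  obtain ⟨x, hx⟩ := Ext.covariant_sequence_exact₃ E₁ h₂ (Ext.mk₀ q₁) (zero_add 1)
    (by rw [← h]; exact h₁.comp_extClass)
  obtain ⟨l, rfl⟩ := (Ext.mk₀_bijective _ _).2 x
  have hl : l ≫ q₂ = q₁ := by
    rw [Ext.mk₀_comp_mk₀] at hx
    exact (Ext.mk₀_bijective _ _).1 hx
  obtain ⟨u, hu⟩ : ∃ u : B ⟶ B, u ≫ i₂ = i₁ ≫ l :=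
    ⟨h₂.exact.lift (i₁ ≫ l) (by simp [hl, w₁]), h₂.exact.lift_f _ _⟩
  have hF : h₁.extClass.comp (Ext.mk₀ u) (add_zero 1) = h₁.extClass :=
    (extClass_of_comm h₁ h₂ hu hl).trans h.symm
  obtain ⟨y, hy⟩ := Ext.contravariant_sequence_exact₁ h₁ B (Ext.mk₀ (𝟙 B + -u)) (add_zero 1)
    (by rw [Ext.mk₀_add, Ext.comp_add, Ext.mk₀_neg, Ext.comp_neg, hF]; simp)
  obtain ⟨v, rfl⟩ := (Ext.mk₀_bijective _ _).2 y
  have hv : i₁ ≫ v = 𝟙 B + -u := by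
    rw [Ext.mk₀_comp_mk₀] at hy
    exact (Ext.mk₀_bijective _ _).1 hy
  let G : ShortComplex.mk i₁ q₁ w₁ ⟶ ShortComplex.mk i₂ q₂ w₂ :=
    { τ₁ := 𝟙 B, τ₂ := l + v ≫ i₂, τ₃ := 𝟙 A
      comm₁₂ := by
        simp [reassoc_of% hv, hu]
      comm₂₃ := by simp [hl, w₂] }
  have : IsIso G.τ₁ := inferInstanceAs (IsIso (𝟙 B))
  have : IsIso G.τ₃ := inferInstanceAs (IsIso (𝟙 A))
  have : IsIso G.τ₂ := ShortComplex.isIso₂_of_shortExact_of_isIso₁₃ G h₁ h₂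
  exact ⟨asIso G.τ₂⟩

/-- A narrow subcategory is closed under direct summands. -/
theorem IsNarrow.mem_of_biprod_mem {C : Type u} [Category.{v} C] [Abelian C]
    {N : Set C} (hN : IsNarrow N) {A B : C} (h : (A ⊞ B) ∈ N) :
    B ∈ N :=
  hN.1 (hN.2.2 (biprod.fst ≫ biprod.inl : A ⊞ B ⟶ A ⊞ B) h h)
    (cokernelEpiComp _ _ ≪≫ cokernelBiprodInlIso)

/-- The canonical short exact sequence relating the kernel and the image of a morphism. -/
theorem shortExact_kernel_image {C : Type u} [Category.{v} C] [Abelian C]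
    {X Y : C} (f : X ⟶ Y) :
    (ShortComplex.mk (kernel.ι f) (Abelian.factorThruImage f)
      (by simp [← cancel_mono (Abelian.image.ι f)])).ShortExact where
  exact := by
    let F : ShortComplex.mk (kernel.ι f) (Abelian.factorThruImage f)
        (by simp [← cancel_mono (Abelian.image.ι f)]) ⟶
        ShortComplex.mk (kernel.ι f) f (kernel.condition f) :=
      { τ₁ := 𝟙 _, τ₂ := 𝟙 _, τ₃ := Abelian.image.ι f }
    have : Epi F.τ₁ := inferInstanceAs (Epi (𝟙 _))
    have : IsIso F.τ₂ := inferInstanceAs (IsIso (𝟙 _))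
    have : Mono F.τ₃ := inferInstanceAs (Mono (Abelian.image.ι f))
    exact (ShortComplex.exact_iff_of_epi_of_isIso_of_mono F).2 (ShortComplex.exact_kernel f)

/-- A narrow subcategory of a hereditary abelian category is closed under images. -/
theorem IsNarrow.image_mem (hher : Hereditary (𝒜 := 𝒜)) {N : Set 𝒜} (hN : IsNarrow N)
    {X Y : 𝒜} (f : X ⟶ Y) (hX : X ∈ N) (hY : Y ∈ N) : Abelian.image f ∈ N := by
  have hI : (ShortComplex.mk (Abelian.image.ι f) (cokernel.π f)
      (kernel.condition _)).ShortExact :=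
    { exact := ShortComplex.exact_kernel _ }
  obtain ⟨x, hx⟩ : ∃ x : Ext (cokernel f) X 1,
      x.comp (Ext.mk₀ (Abelian.factorThruImage f)) (add_zero 1) = hI.extClass :=
    Ext.covariant_sequence_exact₃ _ (shortExact_kernel_image f) hI.extClass one_add_one_eq_two
      (hher _)
  obtain ⟨E, i, q, w, hE, rfl⟩ := exists_shortExact_extClass_eq x
  have sq := IsPushout.of_hasPushout i (Abelian.factorThruImage f)
  obtain ⟨q', w', hP, hr⟩ := exists_shortExact_of_isPushout hE sq
  obtain ⟨e⟩ := nonempty_iso_of_extClass_eq hI hP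
    (hx.symm.trans (extClass_of_comm hE hP sq.w.symm hr))
  have : Mono i := hE.mono_f
  have hmono : Mono (biprod.lift i (-Abelian.factorThruImage f)) :=
    mono_of_mono_fac (biprod.lift_fst _ _)
  have hsq : sq.shortComplex.ShortExact :=
    .mk' sq.exact_shortComplex hmono sq.epi_shortComplex_g
  exact hN.mem_of_biprod_mem (hN.2.1 _ hsq hX (hN.1 hY e))

theorem cokernel_of_map_from_kernel_mem_narrow
    (hher : Hereditary (𝒜 := 𝒜)) (𝒩 : Set 𝒜) (h𝒩 : IsNarrow 𝒩)
    {X Y : 𝒜} (f : X ⟶ Y) (hX : X ∈ 𝒩) (hY : Y ∈ 𝒩)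
    {X' : 𝒜} (hX' : X' ∈ 𝒩) (g : kernel f ⟶ X') :
    cokernel g ∈ 𝒩 := by
  have sq := IsPushout.of_hasPushout (kernel.ι f) g
  obtain ⟨q, w, hP, -⟩ := exists_shortExact_of_isPushout (shortExact_kernel_image f) sq
  have hmem : pushout (kernel.ι f) g ∈ 𝒩 :=
    h𝒩.2.1 _ hP hX' (h𝒩.image_mem hher f hX hY)
  have := isIso_cokernel_map_of_isPushout sq.flip
  exact h𝒩.1 (h𝒩.2.2 (pushout.inl (kernel.ι f) g) hX hmem)
    (asIso (cokernel.map _ _ _ _ sq.flip.w)).symm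
end

section
/- Let 𝒜 be a hereditary abelian category and 𝒩 ⊆ 𝒜 a narrow subcategory. Then every object of the wide closure wide(𝒩) is the kernel of a morphism between two objects of 𝒩. -/
/-!
STATEMENT 4: Let 𝒜 be a hereditary abelian category and 𝒩 ⊆ 𝒜 a narrow subcategory.
Then every object of the wide closure wide(𝒩) is the kernel of a morphism between two
objects of 𝒩.
-/

open CategoryTheory CategoryTheory.Limits

universe w v u

variable {𝒜 : Type u} [Category.{v} 𝒜] [Abelian 𝒜]

/-- A wide subcategory: a (replete) full subcategory closed under kernels, cokernels and
extensions. -/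
def IsWide (W : Set 𝒜) : Prop :=
  Replete W ∧ ClosedUnderKernels W ∧ ClosedUnderCokernels W ∧ ClosedUnderExtensions W

/-- The wide closure of a subcategory: the smallest wide subcategory containing it. -/
def wideClosure (N : Set 𝒜) : Set 𝒜 :=
  {X | ∀ W : Set 𝒜, IsWide W → N ⊆ W → X ∈ W}

variable [HasExt.{w} 𝒜]

open Pretriangulated DerivedCategory

namespace CategoryTheory

section

variable {𝒞 : Type*} [Category* 𝒞] [Abelian 𝒞]

/-- A distinguished triangle in the derived category between objects concentrated in degree `0`
comes from a short exact sequence. -/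
lemma shortExact_of_distTriang_singleFunctor [HasDerivedCategory 𝒞] {X Y Z : 𝒞}
    {f : X ⟶ Y} {g : Y ⟶ Z}
    {δ : (singleFunctor 𝒞 0).obj Z ⟶ ((singleFunctor 𝒞 0).obj X)⟦(1 : ℤ)⟧}
    (hT : Triangle.mk ((singleFunctor 𝒞 0).map f) ((singleFunctor 𝒞 0).map g) δ ∈
      distTriang (DerivedCategory 𝒞)) :
    ∃ w : f ≫ g = 0, (ShortComplex.mk f g w).ShortExact := by
  have w : f ≫ g = 0 := (singleFunctor 𝒞 0).map_injective (by
    simpa using! comp_distTriang_mor_zero₁₂ _ hT)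
  have : Mono f := Preadditive.mono_of_cancel_zero _ fun {A} k hk ↦ by
    obtain ⟨l, hl⟩ := Triangle.coyoneda_exact₂ _ (inv_rot_of_distTriang _ hT)
      ((singleFunctor 𝒞 0).map k) (by
        simpa using! congrArg (singleFunctor 𝒞 0).map hk)
    have : TStructure.t.IsGE (((singleFunctor 𝒞 0).obj Z)⟦(-1 : ℤ)⟧) 1 :=
      TStructure.t.isGE_shift _ 0 (-1) 1
    have hl₀ : l = 0 := TStructure.t.zero (Y := ((singleFunctor 𝒞 0).obj Z)⟦(-1 : ℤ)⟧) l 0 1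
    apply (singleFunctor 𝒞 0).map_injective
    rw [hl, hl₀, Functor.map_zero]
    exact zero_comp
  have : Epi g := Preadditive.epi_of_cancel_zero _ fun {A} k hk ↦ by
    obtain ⟨l, hl⟩ := Triangle.yoneda_exact₃ _ hT
      ((singleFunctor 𝒞 0).map k) (by
        simpa using! congrArg (singleFunctor 𝒞 0).map hk)
    have : TStructure.t.IsLE (((singleFunctor 𝒞 0).obj X)⟦(1 : ℤ)⟧) (-1) :=
      TStructure.t.isLE_shift _ 0 1 (-1)
    have hl₀ : l = 0 := TStructure.t.zero (X := ((singleFunctor 𝒞 0).obj X)⟦(1 : ℤ)⟧) l (-1) 0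
    apply (singleFunctor 𝒞 0).map_injective
    rw [hl, hl₀, Functor.map_zero]
    exact comp_zero
  refine ⟨w, ShortComplex.ShortExact.mk (ShortComplex.exact_of_f_is_kernel _
    (KernelFork.IsLimit.ofι' f w fun {A} k hk ↦ ?_))⟩
  have h : ∃ l, (singleFunctor 𝒞 0).map k = l ≫ (singleFunctor 𝒞 0).map f :=
    Triangle.coyoneda_exact₂ _ hT ((singleFunctor 𝒞 0).map k) (by
      simpa using! congrArg (singleFunctor 𝒞 0).map hk)
  exact ⟨(singleFunctor 𝒞 0).preimage h.choose,
    (singleFunctor 𝒞 0).map_injective (by simpa using h.choose_spec.symm)⟩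

/-- In a morphism of short exact sequences which is the identity on the left, the middle map
extends the right-hand mono to a short exact sequence with the same cokernel. -/
lemma ShortComplex.ShortExact.middle_of_right {W Z Z' A B C : 𝒞}
    {f : W ⟶ Z} {g : Z ⟶ A} {w : f ≫ g = 0} (hS : (ShortComplex.mk f g w).ShortExact)
    {i : A ⟶ B} {q : B ⟶ C} {w' : i ≫ q = 0} (hT : (ShortComplex.mk i q w').ShortExact)
    {f' : W ⟶ Z'} {g' : Z' ⟶ B} {w'' : f' ≫ g' = 0}
    (hS' : (ShortComplex.mk f' g' w'').ShortExact)
    {j : Z ⟶ Z'} (hj₁ : f ≫ j = f') (hj₂ : g ≫ i = j ≫ g') :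
    ∃ w₀ : j ≫ g' ≫ q = 0, (ShortComplex.mk j (g' ≫ q) w₀).ShortExact := by
  have w₀ : j ≫ g' ≫ q = 0 := by rw [← reassoc_of% hj₂, w', comp_zero]
  have : Mono f' := hS'.mono_f
  have : Mono i := hT.mono_f
  have : Epi g := hS.epi_g
  have : Epi g' := hS'.epi_g
  have : Epi q := hT.epi_g
  have : Mono j := Preadditive.mono_of_cancel_zero _ fun {T} k hk ↦ by
    have hkg : k ≫ g = 0 := by
      rw [← cancel_mono i, Category.assoc, hj₂, reassoc_of% hk, zero_comp, zero_comp]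
    obtain ⟨T', π, _, l, hl⟩ := hS.exact.exact_up_to_refinements k hkg
    dsimp at l hl
    have hl₀ : l = 0 := by
      rw [← cancel_mono f', ← hj₁, zero_comp, ← reassoc_of% hl, hk, comp_zero]
    rw [← cancel_epi π, hl, hl₀, zero_comp, comp_zero]
  refine ⟨w₀, ShortComplex.ShortExact.mk ?_⟩
  rw [ShortComplex.exact_iff_exact_up_to_refinements]
  intro T x hx
  dsimp at x hx ⊢
  obtain ⟨T₁, π₁, _, a, ha⟩ := hT.exact.exact_up_to_refinements (x ≫ g') (by simpa using hx)
  obtain ⟨T₂, π₂, _, z, hz⟩ := surjective_up_to_refinements_of_epi g a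
  dsimp at a ha
  obtain ⟨T₃, π₃, _, y, hy⟩ := hS'.exact.exact_up_to_refinements (π₂ ≫ π₁ ≫ x - z ≫ j) (by
    simp [ha, reassoc_of% hz, hj₂])
  dsimp at y hy
  refine ⟨T₃, π₃ ≫ π₂ ≫ π₁, inferInstance, π₃ ≫ z + y ≫ f, ?_⟩
  rw [Preadditive.comp_sub, sub_eq_iff_eq_add] at hy
  simp [hy, hj₁, add_comm]

/-- The pushout of a short exact sequence along a map out of its left term. -/
lemma ShortComplex.ShortExact.pushout {W Z Y X : 𝒞} {a : W ⟶ Z} {b : Z ⟶ Y} {w : a ≫ b = 0}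
    (hS : (ShortComplex.mk a b w).ShortExact) (h : W ⟶ X) :
    (ShortComplex.mk (pushout.inr a h) (pushout.desc b (0 : X ⟶ Y) (by simp [w]))
      (pushout.inr_desc _ _ _)).ShortExact := by
  have : Mono a := hS.mono_f
  have : Epi b := hS.epi_g
  have : Epi (pushout.desc b (0 : X ⟶ Y) (by simp [w] : a ≫ b = h ≫ 0)) :=
    epi_of_epi_fac (pushout.inl_desc b (0 : X ⟶ Y) (by simp [w]))
  refine ShortComplex.ShortExact.mk (ShortComplex.exact_of_g_is_cokernel _
    (CokernelCofork.IsColimit.ofπ' _ _ fun {T} k hk ↦ ?_))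
  have hk' : a ≫ pushout.inl a h ≫ k = 0 := by rw [pushout.condition_assoc, hk, comp_zero]
  refine ⟨hS.exact.desc (pushout.inl a h ≫ k) hk', pushout.hom_ext ?_ ?_⟩
  · exact (pushout.inl_desc_assoc _ _ _ _).trans (hS.exact.g_desc _ hk')
  · exact (pushout.inr_desc_assoc _ _ _ _).trans (zero_comp.trans hk.symm)

/-- Pushing out along a monomorphism does not change kernels. -/
lemma nonempty_kernel_iso_of_pushout {W Z X : 𝒞} (a : W ⟶ Z) [Mono a] (h : W ⟶ X) :
    Nonempty (kernel h ≅ kernel (pushout.inl a h)) := by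
  have sq := (IsPushout.of_hasPushout a h).flip
  have := Abelian.epi_kernel_map_of_isPushout sq
  have : Mono (kernel.map _ _ _ _ sq.w) :=
    have : Mono (kernel.map _ _ _ _ sq.w ≫ kernel.ι _) := by
      rw [kernel.lift_ι]; infer_instance
    mono_of_mono _ (kernel.ι _)
  have := isIso_of_mono_of_epi (kernel.map _ _ _ _ sq.w)
  exact ⟨asIso (kernel.map _ _ _ _ sq.w)⟩

/-- Pushing out does not change cokernels. -/
lemma nonempty_cokernel_iso_of_pushout {W Z X : 𝒞} (a : W ⟶ Z) (h : W ⟶ X) :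
    Nonempty (cokernel h ≅ cokernel (pushout.inl a h)) := by
  have sq := (IsPushout.of_hasPushout a h).flip
  have := isIso_cokernel_map_of_isPushout sq
  exact ⟨asIso (cokernel.map _ _ _ _ sq.w)⟩

end

/-- In a hereditary category, an extension of a subobject `A` of `B` by `W` is the restriction
of an extension of `B` by `W`. -/
lemma _root_.Hereditary.exists_extension (hher : Hereditary.{w} (𝒜 := 𝒜)) {W Z A B C : 𝒜}
    {f : W ⟶ Z} {g : Z ⟶ A} {w : f ≫ g = 0} (hS : (ShortComplex.mk f g w).ShortExact)
    {i : A ⟶ B} {q : B ⟶ C} {w' : i ≫ q = 0} (hT : (ShortComplex.mk i q w').ShortExact) :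
    ∃ (Z' : 𝒜) (f' : W ⟶ Z') (g' : Z' ⟶ B) (w'' : f' ≫ g' = 0) (j : Z ⟶ Z'),
      (ShortComplex.mk f' g' w'').ShortExact ∧ f ≫ j = f' ∧ g ≫ i = j ≫ g' := by
  let _ : HasDerivedCategory 𝒜 := HasDerivedCategory.standard 𝒜
  obtain ⟨x, hx⟩ := Abelian.Ext.contravariant_sequence_exact₁ hT W hS.extClass rfl (hher _)
  have hx' : (singleFunctor 𝒜 0).map i ≫ x.hom = hS.singleδ := by
    rw [Abelian.Ext.singleFunctor_map_comp_hom, ← hS.extClass_hom, ← hx]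
  obtain ⟨M, α, β, hM⟩ := distinguished_cocone_triangle₂ (Z := (singleFunctor 𝒜 0).obj B)
    (X := (singleFunctor 𝒜 0).obj W) x.hom
  have : M.IsLE 0 := TStructure.t.isLE₂ _ hM 0
    (inferInstanceAs (IsLE ((singleFunctor 𝒜 0).obj W) 0))
    (inferInstanceAs (IsLE ((singleFunctor 𝒜 0).obj B) 0))
  have : M.IsGE 0 := TStructure.t.isGE₂ _ hM 0
    (inferInstanceAs (IsGE ((singleFunctor 𝒜 0).obj W) 0))
    (inferInstanceAs (IsGE ((singleFunctor 𝒜 0).obj B) 0))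
  obtain ⟨Z', ⟨e⟩⟩ := exists_iso_singleFunctor_obj_of_isGE_of_isLE M 0
  obtain ⟨f', hf'⟩ := (singleFunctor 𝒜 0).map_surjective (α ≫ e.hom)
  obtain ⟨g', hg'⟩ := (singleFunctor 𝒜 0).map_surjective (e.inv ≫ β)
  have hα : (singleFunctor 𝒜 0).map f' ≫ e.inv = 𝟙 _ ≫ α := by simp [hf']
  have hβ : (singleFunctor 𝒜 0).map g' ≫ 𝟙 _ = e.inv ≫ β := by simp [hg']
  let δ : (singleFunctor 𝒜 0).obj B ⟶ ((singleFunctor 𝒜 0).obj W)⟦(1 : ℤ)⟧ := x.hom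
  have hδ : δ ≫ (𝟙 ((singleFunctor 𝒜 0).obj W))⟦(1 : ℤ)⟧' = 𝟙 _ ≫ δ := by simp
  have hZ' : Triangle.mk ((singleFunctor 𝒜 0).map f') ((singleFunctor 𝒜 0).map g') δ ∈
      distTriang (DerivedCategory 𝒜) :=
    isomorphic_distinguished _ hM _ (Triangle.isoMk _ _ (Iso.refl _) e.symm (Iso.refl _) hα hβ hδ)
  obtain ⟨w'', hS'⟩ := shortExact_of_distTriang_singleFunctor hZ'
  have comm : hS.singleδ ≫ (𝟙 ((singleFunctor 𝒜 0).obj W))⟦(1 : ℤ)⟧' =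
      (singleFunctor 𝒜 0).map i ≫ δ := by
    rw [Functor.map_id, hx']
    exact Category.comp_id _
  obtain ⟨j, hj₁, hj₂⟩ := complete_distinguished_triangle_morphism₂ _ _
    hS.singleTriangle_distinguished hZ' (𝟙 _) ((singleFunctor 𝒜 0).map i) comm
  obtain ⟨j, rfl⟩ := (singleFunctor 𝒜 0).map_surjective j
  exact ⟨Z', f', g', w'', j, hS', (singleFunctor 𝒜 0).map_injective (by simpa using! hj₁),
    (singleFunctor 𝒜 0).map_injective (by simpa using! hj₂)⟩

end CategoryTheory

section

variable {𝒞 : Type*} [Category* 𝒞] [Abelian 𝒞]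

/-- The objects which are kernels of epimorphisms between objects of `N`. -/
def epiKernels (N : Set 𝒞) : Set 𝒞 :=
  {W | ∃ X ∈ N, ∃ Y ∈ N, ∃ (a : W ⟶ X) (b : X ⟶ Y) (w : a ≫ b = 0),
    (ShortComplex.mk a b w).ShortExact}

variable {N : Set 𝒞}

lemma replete_epiKernels : Replete (epiKernels N) := by
  rintro V W ⟨X, hX, Y, hY, a, b, w, hS⟩ e
  exact ⟨X, hX, Y, hY, e.inv ≫ a, b, by simp [w],
    ShortComplex.shortExact_of_iso (S₁ := ShortComplex.mk a b w)
      (ShortComplex.isoMk e (Iso.refl X) (Iso.refl Y) (by simp) (by simp)) hS⟩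

lemma IsNarrow.subset_epiKernels (hN : IsNarrow N) : N ⊆ epiKernels N := by
  intro X hX
  refine ⟨X, hX, _, hN.2.2 (𝟙 X) hX hX, 𝟙 X, cokernel.π (𝟙 X), cokernel.condition _, ?_⟩
  exact ShortComplex.ShortExact.mk
    (ShortComplex.exact_of_g_is_cokernel _ (cokernelIsCokernel (𝟙 X)))

lemma IsNarrow.cokernel_mem_of_epiKernels (hN : IsNarrow N) {W X : 𝒞}
    (hW : W ∈ epiKernels N) (hX : X ∈ N) (h : W ⟶ X) : cokernel h ∈ N := by
  obtain ⟨Z, hZ, Y, hY, a, b, w, hS⟩ := hW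
  obtain ⟨e⟩ := nonempty_cokernel_iso_of_pushout a h
  exact hN.1 (hN.2.2 _ hZ (hN.2.1 _ (hS.pushout h) hX hY)) e.symm

lemma IsNarrow.closedUnderCokernels_epiKernels (hN : IsNarrow N) :
    ClosedUnderCokernels (epiKernels N) := by
  rintro V W f hV ⟨X, hX, Y, hY, a, b, w, hS⟩
  have hc : (f ≫ a) ≫ pushout.inl a (cokernel.π f) = 0 := by simp [pushout.condition]
  have hπ : IsColimit (CokernelCofork.ofπ (pushout.inl a (cokernel.π f)) hc) :=
    CokernelCofork.IsColimit.ofπ' _ _ fun k hk ↦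
      ⟨pushout.desc k (cokernel.desc f (a ≫ k) (by simpa using hk)) (by simp),
        pushout.inl_desc _ _ _⟩
  exact ⟨_, hN.1 (hN.cokernel_mem_of_epiKernels hV hX (f ≫ a))
    ((cokernelIsCokernel _).coconePointUniqueUpToIso hπ), Y, hY, _, _, _,
    hS.pushout (cokernel.π f)⟩

end

section

variable {N : Set 𝒜}

/-- In a hereditary category, kernels of morphisms of a narrow subcategory are kernels of
epimorphisms of that subcategory. -/
lemma IsNarrow.kernel_mem_epiKernels (hN : IsNarrow N) (hher : Hereditary.{w} (𝒜 := 𝒜))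
    {X Y : 𝒜} (f : X ⟶ Y) (hX : X ∈ N) (hY : Y ∈ N) : kernel f ∈ epiKernels N := by
  have hS : (ShortComplex.mk (kernel.ι f) (Abelian.factorThruImage f) (by
      simp [← cancel_mono (Abelian.image.ι f)])).ShortExact :=
    ShortComplex.ShortExact.mk (ShortComplex.exact_of_f_is_kernel _
      (isKernelOfComp (Abelian.image.ι f) f (kernelIsKernel f) _ (by simp)))
  have hT : (ShortComplex.mk (Abelian.image.ι f) (cokernel.π f) (by simp)).ShortExact :=
    ShortComplex.ShortExact.mk (ShortComplex.exact_of_f_is_kernel _ (kernelIsKernel _))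
  obtain ⟨Z, f', g', w'', j, hS', hj₁, hj₂⟩ := hher.exists_extension hS hT
  obtain ⟨_, hZ⟩ := hS.middle_of_right hT hS' hj₁ hj₂
  exact ⟨Z, hN.2.1 _ hZ hX (hN.2.2 f hX hY), Y, hY, f', g', w'', hS'⟩

lemma IsNarrow.closedUnderKernels_epiKernels (hN : IsNarrow N)
    (hher : Hereditary.{w} (𝒜 := 𝒜)) : ClosedUnderKernels (epiKernels N) := by
  rintro V W f ⟨X', hX', Y', hY', a', b', w', hS'⟩ ⟨X, hX, Y, hY, a, b, w, hS⟩
  have : Mono a := hS.mono_f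
  have : Mono a' := hS'.mono_f
  obtain ⟨e⟩ := nonempty_kernel_iso_of_pushout a' (f ≫ a)
  exact replete_epiKernels
    (hN.kernel_mem_epiKernels hher _ hX' (hN.2.1 _ (hS'.pushout (f ≫ a)) hX hY'))
    (e.symm ≪≫ kernelCompMono f a)

lemma IsNarrow.closedUnderExtensions_epiKernels (hN : IsNarrow N)
    (hher : Hereditary.{w} (𝒜 := 𝒜)) : ClosedUnderExtensions (epiKernels N) := by
  rintro ⟨i, p, hip⟩ hS ⟨X₁, hX₁, Y₁, hY₁, a₁, b₁, w₁, hS₁⟩ ⟨X₃, hX₃, Y₃, hY₃, a₃, b₃, w₃, hS₃⟩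
  dsimp at a₁ a₃ hS₁ hS₃ ⊢
  obtain ⟨F, f', g', w', j, hF, hj₁, hj₂⟩ := hher.exists_extension (hS.pushout a₁) hS₃
  obtain ⟨_, hj⟩ := (hS.pushout a₁).middle_of_right hS₃ hF hj₁ hj₂
  have : Mono j := hj.mono_f
  have hE := hS₁.pushout i
  let q : pushout i a₁ ⟶ Y₁ := (pushoutSymmetry i a₁).hom ≫ pushout.desc b₁ 0 (by simp [w₁])
  obtain ⟨e⟩ := nonempty_kernel_iso_of_pushout j q
  refine replete_epiKernels (hN.kernel_mem_epiKernels hher (pushout.inl j q)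
    (hN.2.1 _ hF hX₁ hX₃) (hN.2.1 _ (hj.pushout q) hY₁ hY₃)) (e.symm ≪≫ ?_)
  exact kernelIsIsoComp _ _ ≪≫
    (kernelIsKernel _).conePointUniqueUpToIso hE.fIsKernel

lemma IsNarrow.isWide_epiKernels (hN : IsNarrow N) (hher : Hereditary.{w} (𝒜 := 𝒜)) :
    IsWide (epiKernels N) :=
  ⟨replete_epiKernels, hN.closedUnderKernels_epiKernels hher,
    hN.closedUnderCokernels_epiKernels, hN.closedUnderExtensions_epiKernels hher⟩

end

theorem wideClosure_objects_are_kernels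
    (hher : Hereditary (𝒜 := 𝒜)) (𝒩 : Set 𝒜) (h𝒩 : IsNarrow 𝒩)
    (W : 𝒜) (hW : W ∈ wideClosure 𝒩) :
    ∃ X ∈ 𝒩, ∃ Y ∈ 𝒩, ∃ f : X ⟶ Y, Nonempty (W ≅ kernel f) := by
  obtain ⟨X, hX, Y, hY, a, b, w, hS⟩ :=
    hW _ (h𝒩.isWide_epiKernels hher) h𝒩.subset_epiKernels
  exact ⟨X, hX, Y, hY, b, ⟨hS.fIsKernel.conePointUniqueUpToIso (limit.isLimit _)⟩⟩
end

section
/- Let 𝒜 be a hereditary abelian category and (𝒩(k))_{k∈ℤ} a narrow sequence in 𝒜. Then for every k, the wide closure wide(𝒩(k)) is contained in 𝒩(k+1). -/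
/-!
STATEMENT 9: Let 𝒜 be a hereditary abelian category and (𝒩(k))_{k∈ℤ} a narrow sequence
in 𝒜.  Then for every k, the wide closure wide(𝒩(k)) is contained in 𝒩(k+1).
-/

open CategoryTheory CategoryTheory.Limits

universe w v u

variable {𝒜 : Type u} [Category.{v} 𝒜] [Abelian 𝒜]

/-- A narrow sequence in an abelian category 𝒜: a sequence of (replete) narrow subcategories,
each containing the zero objects, which is nondecreasing and satisfies the gluing condition
on five-term exact sequences. -/
structure NarrowSequence (𝒜 : Type u) [Category.{v} 𝒜] [Abelian 𝒜] where
  /-- the underlying sequence of subcategories -/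
  N : ℤ → Set 𝒜
  zero_mem : ∀ (k : ℤ) (Z : 𝒜), IsZero Z → Z ∈ N k
  replete : ∀ k : ℤ, Replete (N k)
  ext_closed : ∀ k : ℤ, ClosedUnderExtensions (N k)
  coker_closed : ∀ k : ℤ, ClosedUnderCokernels (N k)
  incr : ∀ k : ℤ, N k ⊆ N (k + 1)
  glue : ∀ (k : ℤ) ⦃A B C D E : 𝒜⦄ (f : A ⟶ B) (g : B ⟶ C) (h : C ⟶ D) (i : D ⟶ E)
    (w₁ : f ≫ g = 0) (w₂ : g ≫ h = 0) (w₃ : h ≫ i = 0),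
    (ShortComplex.mk f g w₁).Exact → (ShortComplex.mk g h w₂).Exact →
    (ShortComplex.mk h i w₃).Exact →
    A ∈ N (k + 1) → B ∈ N k → D ∈ N k → E ∈ N (k - 1) → C ∈ N k

variable [HasExt.{w} 𝒜]

section Extensions

open Pretriangulated DerivedCategory Abelian

variable {C : Type u} [Category.{v} C] [Abelian C]

/-- A short complex whose image in the derived category extends to a distinguished triangle
is short exact. -/
lemma shortExact_of_distinguished [HasDerivedCategory C] (S : ShortComplex C)
    (δ : (singleFunctor C 0).obj S.X₃ ⟶ ((singleFunctor C 0).obj S.X₁)⟦(1 : ℤ)⟧)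
    (hδ : Triangle.mk ((singleFunctor C 0).map S.f) ((singleFunctor C 0).map S.g) δ ∈
      distTriang (DerivedCategory C)) : S.ShortExact := by
  let F := singleFunctor C 0 ⋙ homologyFunctor C 0
  let e : F ≅ 𝟭 C := singleFunctorCompHomologyFunctorIso C 0
  have hex : (S.map F).Exact := HomologySequence.exact₂ _ hδ 0
  have hmono : Mono (F.map S.f) :=
    (HomologySequence.mono_homologyMap_mor₁_iff _ hδ (-1) 0).2
      ((isZero_of_isGE ((singleFunctor C 0).obj S.X₃) 0 (-1) (by lia)).eq_of_src _ _)
  have hepi : Epi (F.map S.g) :=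
    (HomologySequence.epi_homologyMap_mor₂_iff _ hδ 0 1).2
      ((isZero_of_isLE ((singleFunctor C 0).obj S.X₁) 0 1 (by lia)).eq_of_tgt _ _)
  have hF : (S.map F).ShortExact := { exact := hex, mono_f := hmono, epi_g := hepi }
  exact ShortComplex.shortExact_of_iso (S.mapNatIso e) hF

variable [HasExt.{w} C]

/-- A commutative square of extension classes lifts to a morphism of short exact sequences. -/
lemma exists_shortComplexHom_of_extClass {S T : ShortComplex C} (hS : S.ShortExact)
    (hT : T.ShortExact) (a : S.X₁ ⟶ T.X₁) (c : S.X₃ ⟶ T.X₃)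
    (h : hS.extClass.comp (Ext.mk₀ a) (add_zero 1) =
      (Ext.mk₀ c).comp hT.extClass (zero_add 1)) :
    ∃ φ : S ⟶ T, φ.τ₁ = a ∧ φ.τ₃ = c := by
  let := HasDerivedCategory.standard C
  have h' := congrArg Ext.hom h
  simp only [Ext.comp_hom, Ext.mk₀_hom, ShortComplex.ShortExact.extClass_hom,
    ShiftedHom.comp_mk₀, ShiftedHom.mk₀_comp] at h'
  obtain ⟨b, hb₁, hb₂⟩ := complete_distinguished_triangle_morphism₂ _ _
    hS.singleTriangle_distinguished hT.singleTriangle_distinguished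
    ((singleFunctor C 0).map a) ((singleFunctor C 0).map c) h'
  obtain ⟨b, rfl⟩ := (singleFunctor C 0).map_surjective b
  refine ⟨⟨a, b, c, ?_, ?_⟩, rfl, rfl⟩
  · exact (singleFunctor C 0).map_injective (by simpa using! hb₁.symm)
  · exact (singleFunctor C 0).map_injective (by simpa using! hb₂.symm)

/-- Every class in `Ext¹` is the class of a short exact sequence. -/
lemma exists_shortExact_of_ext {X Z : C} (e : Ext Z X 1) :
    ∃ (E : C) (i : X ⟶ E) (p : E ⟶ Z) (w : i ≫ p = 0)
      (h : (ShortComplex.mk i p w).ShortExact), h.extClass = e := by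
  let := HasDerivedCategory.standard C
  let L := singleFunctor C 0
  obtain ⟨T, f, g, hT⟩ := distinguished_cocone_triangle₂ (Z := L.obj Z) (X := L.obj X) e.hom
  have : T.IsLE 0 := TStructure.t.isLE₂ _ hT 0
    (inferInstanceAs (((singleFunctor C 0).obj X).IsLE 0))
    (inferInstanceAs (((singleFunctor C 0).obj Z).IsLE 0))
  have : T.IsGE 0 := TStructure.t.isGE₂ _ hT 0
    (inferInstanceAs (((singleFunctor C 0).obj X).IsGE 0))
    (inferInstanceAs (((singleFunctor C 0).obj Z).IsGE 0))
  obtain ⟨E, ⟨α⟩⟩ := exists_iso_singleFunctor_obj_of_isGE_of_isLE T 0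
  obtain ⟨i, hi⟩ := (singleFunctor C 0).map_surjective (f ≫ α.hom)
  obtain ⟨p, hp⟩ := (singleFunctor C 0).map_surjective (α.inv ≫ g)
  have hi' : L.map i ≫ α.inv = 𝟙 _ ≫ f := by simp [L, hi]
  have hp' : L.map p ≫ 𝟙 _ = α.inv ≫ g := by simp [L, hp]
  have he : e.hom ≫ (shiftFunctor (DerivedCategory C) (1 : ℤ)).map (𝟙 (L.obj X)) =
      𝟙 (L.obj Z) ≫ e.hom := by
    rw [CategoryTheory.Functor.map_id, Category.id_comp]
    exact Category.comp_id _
  have hT' : Triangle.mk (L.map i) (L.map p) e.hom ∈ distTriang (DerivedCategory C) :=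
    isomorphic_distinguished _ hT _
      (Triangle.isoMk _ _ (Iso.refl _) α.symm (Iso.refl _) hi' hp' he)
  have w : i ≫ p = 0 := L.map_injective (by
    simpa using! comp_distTriang_mor_zero₁₂ _ hT')
  have h := shortExact_of_distinguished (ShortComplex.mk i p w) e.hom hT'
  have hp_epi : Epi p := h.epi_g
  refine ⟨E, i, p, w, h, ?_⟩
  obtain ⟨c, hc₁, hc₂⟩ := complete_distinguished_triangle_morphism _ _ hT'
    h.singleTriangle_distinguished (𝟙 (L.obj X)) (𝟙 (L.obj E))
    ((Category.comp_id (L.map i)).trans (Category.id_comp (L.map i)).symm)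
  obtain ⟨c, rfl⟩ := L.map_surjective c
  have hc : c = 𝟙 Z := by
    rw [← cancel_epi p, Category.comp_id]
    exact L.map_injective (((L.map_comp p c).trans hc₁).trans (Category.id_comp (L.map p)))
  subst hc
  apply Ext.ext
  rw [ShortComplex.ShortExact.extClass_hom]
  have h₁ : e.hom = 𝟙 (L.obj Z) ≫ e.hom := (Category.id_comp _).symm
  have h₂ : L.map (𝟙 Z) ≫ h.singleδ = h.singleδ := by
    rw [L.map_id]
    exact Category.id_comp _
  exact (h₁.trans (he.symm.trans (hc₂.trans h₂))).symm

end Extensions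

section Diagrams

variable {C : Type u} [Category.{v} C] [Abelian C]

/-- A morphism of short exact sequences that is a monomorphism on the third terms induces a short
exact sequence of cokernels. -/
lemma shortExact_cokernels {S T : ShortComplex C} (hS : S.ShortExact) (hT : T.ShortExact)
    (φ : S ⟶ T) [Mono φ.τ₃] :
    (ShortComplex.mk (cokernel.map φ.τ₁ φ.τ₂ S.f T.f φ.comm₁₂)
      (cokernel.map φ.τ₂ φ.τ₃ S.g T.g φ.comm₂₃) (by ext; simp)).ShortExact := by
  have := hT.epi_g
  have := hS.mono_f
  have := hT.mono_f
  have := hS.epi_g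
  have hπ₁ : cokernel.π φ.τ₁ ≫ cokernel.map φ.τ₁ φ.τ₂ S.f T.f φ.comm₁₂ =
      T.f ≫ cokernel.π φ.τ₂ := cokernel.π_desc _ _ _
  have hπ₂ : cokernel.π φ.τ₂ ≫ cokernel.map φ.τ₂ φ.τ₃ S.g T.g φ.comm₂₃ =
      T.g ≫ cokernel.π φ.τ₃ := cokernel.π_desc _ _ _
  refine { exact := ?_, mono_f := ?_, epi_g := ?_ }
  · rw [ShortComplex.exact_iff_exact_up_to_refinements]
    intro A z hz
    dsimp at z hz
    obtain ⟨A₁, π₁, _, y, hy⟩ := surjective_up_to_refinements_of_epi (cokernel.π φ.τ₂) z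
    have hy₀ : (y ≫ T.g) ≫ cokernel.π φ.τ₃ = 0 := by
      rw [Category.assoc, ← hπ₂, ← Category.assoc, ← hy, Category.assoc, hz, comp_zero]
    obtain ⟨A₂, π₂, _, u, hu⟩ :=
      (ShortComplex.exact_cokernel φ.τ₃).exact_up_to_refinements (y ≫ T.g) hy₀
    obtain ⟨A₃, π₃, _, s, hs⟩ := surjective_up_to_refinements_of_epi S.g u
    dsimp at hu
    have hd : (π₃ ≫ π₂ ≫ y - s ≫ φ.τ₂) ≫ T.g = 0 := by
      rw [Preadditive.sub_comp, Category.assoc, Category.assoc, Category.assoc, hu,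
        φ.comm₂₃, ← Category.assoc, hs, Category.assoc, sub_self]
    refine ⟨A₃, π₃ ≫ π₂ ≫ π₁, inferInstance, hT.exact.lift _ hd ≫ cokernel.π φ.τ₁, ?_⟩
    dsimp
    rw [Category.assoc (hT.exact.lift _ hd), hπ₁, hT.exact.lift_f_assoc, Preadditive.sub_comp,
      Category.assoc s, cokernel.condition, comp_zero, sub_zero]
    simp only [Category.assoc, hy]
  · refine Preadditive.mono_of_cancel_zero _ fun {A} z hz => ?_
    dsimp at z hz
    obtain ⟨A₁, π₁, _, x, hx⟩ := surjective_up_to_refinements_of_epi (cokernel.π φ.τ₁) z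
    have hx₀ : (x ≫ T.f) ≫ cokernel.π φ.τ₂ = 0 := by
      rw [Category.assoc, ← hπ₁, ← Category.assoc, ← hx, Category.assoc, hz, comp_zero]
    obtain ⟨A₂, π₂, _, y, hy⟩ :=
      (ShortComplex.exact_cokernel φ.τ₂).exact_up_to_refinements (x ≫ T.f) hx₀
    dsimp at hy
    have hyg : y ≫ S.g = 0 := by
      rw [← cancel_mono φ.τ₃, Category.assoc, ← φ.comm₂₃, ← Category.assoc, ← hy]
      simp
    have hxu : π₂ ≫ x = hS.exact.lift y hyg ≫ φ.τ₁ := by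
      rw [← cancel_mono T.f, Category.assoc, Category.assoc, φ.comm₁₂, hS.exact.lift_f_assoc, hy]
    rw [← cancel_epi π₁, hx, ← cancel_epi π₂, ← Category.assoc, hxu]
    simp
  · have : Epi (cokernel.π φ.τ₂ ≫ cokernel.map φ.τ₂ φ.τ₃ S.g T.g φ.comm₂₃) := by
      rw [hπ₂]
      infer_instance
    exact epi_of_epi (cokernel.π φ.τ₂) _

/-- A morphism of short exact sequences that is a monomorphism on the third terms induces an
isomorphism between the kernels on the first and second terms. -/
lemma nonempty_kernel_iso_of_mono_τ₃ {S T : ShortComplex C} (hS : S.ShortExact)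
    (hT : T.ShortExact) (φ : S ⟶ T) [Mono φ.τ₃] :
    Nonempty (kernel φ.τ₁ ≅ kernel φ.τ₂) := by
  have := hS.mono_f
  have := hT.mono_f
  have hg : kernel.ι φ.τ₂ ≫ S.g = 0 := by
    rw [← cancel_mono φ.τ₃, Category.assoc, ← φ.comm₂₃, kernel.condition_assoc, zero_comp,
      zero_comp]
  exact ⟨{
    hom := kernel.map φ.τ₁ φ.τ₂ S.f T.f φ.comm₁₂
    inv := kernel.lift _ (hS.exact.lift (kernel.ι φ.τ₂) hg) (by
      rw [← cancel_mono T.f, Category.assoc, φ.comm₁₂, hS.exact.lift_f_assoc, kernel.condition,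
        zero_comp])
    hom_inv_id := by
      rw [← cancel_mono (kernel.ι φ.τ₁), ← cancel_mono S.f]
      simp
    inv_hom_id := by
      rw [← cancel_mono (kernel.ι φ.τ₂)]
      simp }⟩

/-- The middle square of a morphism of short exact sequences that is an isomorphism on the third
terms gives a short exact sequence with middle term a biproduct. -/
lemma shortExact_biprod_of_isIso_τ₃ {S T : ShortComplex C} (hS : S.ShortExact)
    (hT : T.ShortExact) (φ : S ⟶ T) [IsIso φ.τ₃] :
    (ShortComplex.mk (biprod.lift S.f φ.τ₁) (biprod.desc φ.τ₂ (-T.f))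
      (by simp [φ.comm₁₂])).ShortExact := by
  have := hS.mono_f
  have := hT.mono_f
  have := hS.epi_g
  refine { exact := ?_, mono_f := ?_, epi_g := ?_ }
  · rw [ShortComplex.exact_iff_exact_up_to_refinements]
    intro A z hz
    dsimp at z hz
    have hz' : (z ≫ biprod.fst) ≫ φ.τ₂ = (z ≫ biprod.snd) ≫ T.f := by
      have h := biprod.desc_eq (f := φ.τ₂) (g := -T.f)
      rw [← sub_eq_zero, ← hz, h]
      simp [sub_eq_add_neg]
    have hg : (z ≫ biprod.fst) ≫ S.g = 0 := by
      rw [← cancel_mono φ.τ₃, Category.assoc, ← φ.comm₂₃, ← Category.assoc, hz', Category.assoc,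
        T.zero, comp_zero, zero_comp]
    refine ⟨A, 𝟙 A, inferInstance, hS.exact.lift _ hg, ?_⟩
    dsimp
    rw [Category.id_comp]
    apply biprod.hom_ext
    · simp
    · rw [← cancel_mono T.f, ← hz']
      simp [φ.comm₁₂]
  · have : Mono (biprod.lift S.f φ.τ₁ ≫ biprod.fst) := by
      rw [biprod.lift_fst]
      infer_instance
    exact mono_of_mono _ biprod.fst
  · refine Preadditive.epi_of_cancel_zero _ fun {A} z hz => ?_
    dsimp at z hz
    have h₁ : φ.τ₂ ≫ z = 0 := by simpa using biprod.inl ≫= hz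
    have h₂ : T.f ≫ z = 0 := by simpa using biprod.inr ≫= hz
    have := hT.epi_g
    have hd := hT.exact.g_desc z h₂
    have hd₀ : hT.exact.desc z h₂ = 0 := by
      rw [← cancel_epi φ.τ₃, ← cancel_epi S.g, ← φ.comm₂₃_assoc, hd, h₁]
      simp
    rw [← hd, hd₀, comp_zero]

end Diagrams

section KernelsOfEpis

open ZeroObject

variable {C : Type u} [Category.{v} C] [Abelian C]

/-- The objects that are kernels of epimorphisms between objects of `N`. -/
def kernelsOfEpis (N : Set C) : Set C :=
  {K | ∃ (X Y : C) (i : K ⟶ X) (p : X ⟶ Y) (w : i ≫ p = 0),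
    (ShortComplex.mk i p w).ShortExact ∧ X ∈ N ∧ Y ∈ N}

lemma replete_kernelsOfEpis (N : Set C) : Replete (kernelsOfEpis N) := by
  rintro K L ⟨X, Y, i, p, w, h, hX, hY⟩ e
  refine ⟨X, Y, e.inv ≫ i, p, by simp [w], ?_, hX, hY⟩
  refine (ShortComplex.shortExact_iff_of_iso ?_).1 h
  exact ShortComplex.isoMk e (Iso.refl _) (Iso.refl _) (by simp) (by simp)

/-- The short exact sequence `0 ⟶ X ⟶ X ⟶ Z ⟶ 0` with `Z` zero. -/
lemma shortExact_id_zero (X : C) {Z : C} (hZ : IsZero Z) :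
    (ShortComplex.mk (𝟙 X) (0 : X ⟶ Z) comp_zero).ShortExact :=
  { exact := (ShortComplex.exact_iff_epi _ rfl).2 (inferInstanceAs (Epi (𝟙 X)))
    mono_f := inferInstanceAs (Mono (𝟙 X))
    epi_g := ⟨fun _ _ _ => hZ.eq_of_src _ _⟩ }

lemma subset_kernelsOfEpis {N : Set C} {Z : C} (hZ : IsZero Z) (hZN : Z ∈ N) :
    N ⊆ kernelsOfEpis N :=
  fun X hX => ⟨X, Z, 𝟙 X, 0, comp_zero, shortExact_id_zero X hZ, hX, hZN⟩

/-- The cokernel of the first map of a short exact sequence is its third term. -/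
noncomputable def cokernelIsoOfShortExact {S : ShortComplex C} (hS : S.ShortExact) :
    cokernel S.f ≅ S.X₃ :=
  (cokernelIsCokernel S.f).coconePointUniqueUpToIso hS.gIsCokernel

/-- The cokernel of a map from an object of `N` to a kernel of an epimorphism between objects of `N`
is again a kernel of such an epimorphism. -/
lemma cokernel_mem_kernelsOfEpis {N : Set C} (hrep : Replete N) (hcok : ClosedUnderCokernels N)
    {X K : C} (g : X ⟶ K) (hX : X ∈ N) (hK : K ∈ kernelsOfEpis N) :
    cokernel g ∈ kernelsOfEpis N := by
  obtain ⟨X', Y', i, p, w, h, hX', hY'⟩ := hK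
  have hZ := isZero_zero C
  let φ : ShortComplex.mk (𝟙 X) (0 : X ⟶ 0) comp_zero ⟶ ShortComplex.mk i p w :=
    { τ₁ := g, τ₂ := g ≫ i, τ₃ := 0 }
  have : Mono φ.τ₃ := ⟨fun _ _ _ => hZ.eq_of_tgt _ _⟩
  refine ⟨_, _, _, _, _, shortExact_cokernels (shortExact_id_zero X hZ) h φ, hcok _ hX hX', ?_⟩
  exact hrep hY' cokernelZeroIsoTarget.symm

/-- A morphism of short exact sequences that is an isomorphism on the third terms induces an
isomorphism between the cokernels on the first and second terms. -/
lemma nonempty_cokernel_iso_of_isIso_τ₃ {S T : ShortComplex C} (hS : S.ShortExact)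
    (hT : T.ShortExact) (φ : S ⟶ T) [IsIso φ.τ₃] :
    Nonempty (cokernel φ.τ₁ ≅ cokernel φ.τ₂) := by
  have h := shortExact_cokernels hS hT φ
  have := h.isIso_f_iff.2 (isZero_cokernel_of_epi φ.τ₃)
  exact ⟨asIso (cokernel.map φ.τ₁ φ.τ₂ S.f T.f φ.comm₁₂)⟩

end KernelsOfEpis

section Hereditary

open Abelian

/-- In a hereditary category every extension of `S.X₃` by `S.X₁` lifts along an epimorphism onto
`S.X₁`. -/
lemma Hereditary.exists_lift_extension (hher : Hereditary (𝒜 := 𝒜)) {S : ShortComplex 𝒜}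
    (hS : S.ShortExact) {X : 𝒜} (p : X ⟶ S.X₁) [Epi p] :
    ∃ (T : ShortComplex 𝒜) (_ : T.ShortExact) (φ : T ⟶ S),
      T.X₁ = X ∧ T.X₃ = S.X₃ ∧ IsIso φ.τ₃ := by
  have hp : (ShortComplex.mk (kernel.ι p) p (kernel.condition p)).ShortExact :=
    { exact := ShortComplex.exact_kernel p }
  obtain ⟨e, he⟩ := Ext.covariant_sequence_exact₃ S.X₃ hp hS.extClass rfl (hher _)
  obtain ⟨E, i, q, w, hE, rfl⟩ := exists_shortExact_of_ext e
  obtain ⟨φ, -, h₃⟩ := exists_shortComplexHom_of_extClass hE hS p (𝟙 _) (by simpa using he)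
  exact ⟨_, hE, φ, rfl, rfl, by rw [h₃]; infer_instance⟩

/-- In a hereditary category, narrow subcategories are closed under coimages. -/
lemma IsNarrow.coimage_mem (hher : Hereditary (𝒜 := 𝒜)) {N : Set 𝒜} (hN : IsNarrow N)
    {X Y : 𝒜} (f : X ⟶ Y) (hX : X ∈ N) (hY : Y ∈ N) : Abelian.coimage f ∈ N := by
  obtain ⟨hrep, hext, hcok⟩ := hN
  let j := Abelian.factorThruCoimage f
  have hS : (ShortComplex.mk j (cokernel.π j) (cokernel.condition j)).ShortExact :=
    { exact := ShortComplex.exact_cokernel j }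
  have hj : cokernel j ∈ N := by
    refine hrep (hcok f hX hY) ?_
    exact cokernelIsoOfEq (Abelian.coimage.fac f).symm ≪≫ cokernelEpiComp _ _
  obtain ⟨T, hT, φ, h₁, h₃, _⟩ := hher.exists_lift_extension hS (Abelian.coimage.π f)
  have hT₂ : T.X₂ ∈ N := hext T hT (h₁ ▸ hX) (h₃ ▸ hj)
  have hsum : (T.X₂ ⊞ Abelian.coimage f : 𝒜) ∈ N :=
    hext _ (shortExact_biprod_of_isIso_τ₃ hT hS φ) (h₁ ▸ hX) hY
  exact hrep (hcok (biprod.inl : T.X₂ ⟶ T.X₂ ⊞ Abelian.coimage f) hT₂ hsum)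
    cokernelBiprodInlIso

lemma IsNarrow.kernel_mem_kernelsOfEpis (hher : Hereditary (𝒜 := 𝒜)) {N : Set 𝒜}
    (hN : IsNarrow N) {X Y : 𝒜} (f : X ⟶ Y) (hX : X ∈ N) (hY : Y ∈ N) :
    kernel f ∈ kernelsOfEpis N :=
  ⟨_, _, kernel.ι f, Abelian.coimage.π f, cokernel.condition _,
    { exact := ShortComplex.exact_cokernel (kernel.ι f) }, hX, hN.coimage_mem hher f hX hY⟩

lemma IsNarrow.kernelsOfEpis_closedUnderExtensions (hher : Hereditary (𝒜 := 𝒜)) {N : Set 𝒜}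
    (hN : IsNarrow N) : ClosedUnderExtensions (kernelsOfEpis N) := by
  obtain ⟨hrep, hext, -⟩ := hN
  rintro S hS ⟨X₁, Y₁, i₁, p₁, w₁, hK₁, hX₁, hY₁⟩ ⟨X₂, Y₂, i₂, p₂, w₂, hK₂, hX₂, hY₂⟩
  obtain ⟨e, he⟩ := Ext.contravariant_sequence_exact₁ hK₂ _
    (hS.extClass.comp (Ext.mk₀ i₁) (add_zero 1)) rfl (hher _)
  obtain ⟨Q, i, p, w, hQ, rfl⟩ := exists_shortExact_of_ext e
  obtain ⟨φ, h₁, h₃⟩ := exists_shortComplexHom_of_extClass hS hQ i₁ i₂ he.symm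
  have : Mono φ.τ₁ := by rw [h₁]; exact hK₁.mono_f
  have : Mono φ.τ₃ := by rw [h₃]; exact hK₂.mono_f
  have := hS.mono_f
  have := hQ.mono_f
  have : Mono φ.τ₂ := ShortComplex.mono_τ₂_of_exact_of_mono φ hS.exact
  have hc₁ : cokernel φ.τ₁ ∈ N :=
    hrep hY₁ ((cokernelIsoOfEq h₁) ≪≫ cokernelIsoOfShortExact hK₁).symm
  have hc₃ : cokernel φ.τ₃ ∈ N :=
    hrep hY₂ ((cokernelIsoOfEq h₃) ≪≫ cokernelIsoOfShortExact hK₂).symm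
  exact ⟨Q, cokernel φ.τ₂, φ.τ₂, cokernel.π φ.τ₂, cokernel.condition _,
    { exact := ShortComplex.exact_cokernel φ.τ₂ }, hext _ hQ hX₁ hX₂,
    hext _ (shortExact_cokernels hS hQ φ) hc₁ hc₃⟩

/-- In a hereditary category, a map `f : K ⟶ L` between kernels of epimorphisms between objects of
`N` has the same kernel and cokernel as a map whose source is in `N`. -/
lemma IsNarrow.exists_kernel_cokernel_iso (hher : Hereditary (𝒜 := 𝒜)) {N : Set 𝒜}
    (hN : IsNarrow N) {Z : 𝒜} (hZ : IsZero Z) (hZN : Z ∈ N) {K L : 𝒜} (f : K ⟶ L)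
    (hK : K ∈ kernelsOfEpis N) (hL : L ∈ kernelsOfEpis N) :
    ∃ (X P : 𝒜) (g : X ⟶ P), X ∈ N ∧ P ∈ kernelsOfEpis N ∧
      Nonempty (kernel f ≅ kernel g) ∧ Nonempty (cokernel f ≅ cokernel g) := by
  obtain ⟨X, Y, i, p, w, h, hX, hY⟩ := hK
  obtain ⟨P, j, q, w', hP, he⟩ :=
    exists_shortExact_of_ext (h.extClass.comp (Ext.mk₀ f) (add_zero 1))
  obtain ⟨φ, rfl, h₃⟩ := exists_shortComplexHom_of_extClass h hP f (𝟙 Y) (by simp [he])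
  have : IsIso φ.τ₃ := by rw [h₃]; infer_instance
  exact ⟨X, P, φ.τ₂, hX, hN.kernelsOfEpis_closedUnderExtensions hher _ hP hL
    (subset_kernelsOfEpis hZ hZN hY), nonempty_kernel_iso_of_mono_τ₃ h hP φ,
    nonempty_cokernel_iso_of_isIso_τ₃ h hP φ⟩

/-- In a hereditary category, the kernels of epimorphisms between objects of a narrow subcategory
form a wide subcategory. -/
lemma IsNarrow.isWide_kernelsOfEpis (hher : Hereditary (𝒜 := 𝒜)) {N : Set 𝒜}
    (hN : IsNarrow N) {Z : 𝒜} (hZ : IsZero Z) (hZN : Z ∈ N) : IsWide (kernelsOfEpis N) := by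
  refine ⟨replete_kernelsOfEpis N, fun K L f hK hL => ?_, fun K L f hK hL => ?_,
    hN.kernelsOfEpis_closedUnderExtensions hher⟩
  · obtain ⟨X, P, g, hX, ⟨X', Y', i, p, w, h, hX', hY'⟩, ⟨e⟩, -⟩ :=
      hN.exists_kernel_cokernel_iso hher hZ hZN f hK hL
    have : Mono i := h.mono_f
    exact replete_kernelsOfEpis N (hN.kernel_mem_kernelsOfEpis hher (g ≫ i) hX hX')
      (e ≪≫ (kernelCompMono g i).symm).symm
  · obtain ⟨X, P, g, hX, hP, -, ⟨e⟩⟩ := hN.exists_kernel_cokernel_iso hher hZ hZN f hK hL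
    exact replete_kernelsOfEpis N (cokernel_mem_kernelsOfEpis hN.1 hN.2.2 g hX hP) e.symm

end Hereditary

open ZeroObject in
/-- In a narrow sequence, kernels of epimorphisms between objects of one term lie in the next. -/
lemma NarrowSequence.kernelsOfEpis_subset {C : Type u} [Category.{v} C] [Abelian C]
    (𝒩 : NarrowSequence C) (k : ℤ) : kernelsOfEpis (𝒩.N k) ⊆ 𝒩.N (k + 1) := by
  rintro K ⟨X, Y, i, p, w, h, hX, hY⟩
  have hZ := isZero_zero C
  refine 𝒩.glue (k + 1) (0 : (0 : C) ⟶ 0) (0 : (0 : C) ⟶ K) i p comp_zero zero_comp w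
    (ShortComplex.exact_of_isZero_X₂ _ hZ) ((ShortComplex.exact_iff_mono _ rfl).2 h.mono_f)
    h.exact (𝒩.zero_mem _ _ hZ) (𝒩.zero_mem _ _ hZ) (𝒩.incr k hX) ?_
  rwa [add_sub_cancel_right]

theorem wideClosure_subset_next_of_narrowSequence
    (hher : Hereditary (𝒜 := 𝒜)) (𝒩 : NarrowSequence 𝒜) (k : ℤ) :
    wideClosure (𝒩.N k) ⊆ 𝒩.N (k + 1) := by
  intro X hX
  have hN : IsNarrow (𝒩.N k) := ⟨𝒩.replete k, 𝒩.ext_closed k, 𝒩.coker_closed k⟩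
  have hZ := isZero_zero 𝒜
  have hZN := 𝒩.zero_mem k _ hZ
  exact 𝒩.kernelsOfEpis_subset k
    (hX _ (hN.isWide_kernelsOfEpis hher hZ hZN) (subset_kernelsOfEpis hZ hZN))
end

section
/- Let 𝒰 and 𝒱 be preaisles in a triangulated category 𝒯 such that Hom(U[n], V) = 0 for all U ∈ 𝒰, V ∈ 𝒱, n ∈ ℤ (i.e. 𝒰 ⊆ ⊥𝒱). Then 𝒰 ∗ 𝒱 is a preaisle. -/
/-!
STATEMENT 10: Let 𝒰 and 𝒱 be preaisles in a triangulated category 𝒯 such that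
Hom(U[n], V) = 0 for all U ∈ 𝒰, V ∈ 𝒱, n ∈ ℤ (i.e. 𝒰 ⊆ ⊥𝒱).  Then 𝒰 ∗ 𝒱 is a preaisle.
-/

open CategoryTheory CategoryTheory.Limits CategoryTheory.Pretriangulated

universe v u

variable {𝒯 : Type u} [Category.{v} 𝒯] [Preadditive 𝒯] [HasZeroObject 𝒯] [HasShift 𝒯 ℤ]
  [∀ n : ℤ, (CategoryTheory.shiftFunctor 𝒯 n).Additive] [Pretriangulated 𝒯] [IsTriangulated 𝒯]

/-- A preaisle in a triangulated category: a full subcategory closed under suspension and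
under extensions. -/
def IsPreaisle (U : Set 𝒯) : Prop :=
  (∀ X ∈ U, X⟦(1 : ℤ)⟧ ∈ U) ∧
  (∀ T : Triangle 𝒯, (T ∈ distTriang 𝒯) → T.obj₁ ∈ U → T.obj₃ ∈ U → T.obj₂ ∈ U)

/-- `𝒰 ∗ 𝒱`: the full subcategory of objects `X` occurring in a distinguished triangle
`U → X → V → U⟦1⟧` with `U ∈ 𝒰` and `V ∈ 𝒱`. -/
def star (U V : Set 𝒯) : Set 𝒯 :=
  {X | ∃ (A B : 𝒯) (f : A ⟶ X) (g : X ⟶ B) (h : B ⟶ A⟦(1 : ℤ)⟧),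
    (Triangle.mk f g h ∈ distTriang 𝒯) ∧ A ∈ U ∧ B ∈ V}

namespace CategoryTheory.ObjectProperty

variable {C : Type*} [Category* C] [Preadditive C] [HasZeroObject C] [HasShift C ℤ]
  [∀ n : ℤ, (CategoryTheory.shiftFunctor C n).Additive] [Pretriangulated C]

/-- If all connecting morphisms `Z ⟶ Y⟦1⟧` vanish, then extensions of `Z` by `Y` split, so they
are also extensions of `Y` by `Z`. -/
lemma extensionProduct_le_swap_of_eq_zero {P Q : ObjectProperty C}
    (hzero : ∀ Y Z : C, P Y → Q Z → ∀ f : Z ⟶ Y⟦(1 : ℤ)⟧, f = 0) :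
    extensionProduct P Q ≤ extensionProduct Q P := by
  rintro X ⟨Y, Z, f, g, h, hT, hY, hZ⟩
  obtain ⟨e, -⟩ := exists_iso_binaryBiproduct_of_distTriang _ hT (hzero Y Z hY hZ h)
  exact (extensionProduct Q P).prop_of_iso (e ≪≫ biprod.braiding Y Z).symm
    ⟨Z, Y, _, _, _, binaryBiproductTriangle_distinguished Z Y, hZ, hY⟩

/-- If `P` and `Q` are closed under extensions and `Q * P ≤ P * Q`, then `P * Q` is closed
under extensions. -/
lemma extensionProduct_extensionProduct_self_le [IsTriangulated C] {P Q : ObjectProperty C}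
    (hP : extensionProduct P P ≤ P) (hQ : extensionProduct Q Q ≤ Q)
    (hQP : extensionProduct Q P ≤ extensionProduct P Q) :
    extensionProduct (extensionProduct P Q) (extensionProduct P Q) ≤ extensionProduct P Q :=
  calc
    _ = extensionProduct P (extensionProduct (extensionProduct Q P) Q) := by
      simp only [extensionProduct_assoc]
    _ ≤ extensionProduct P (extensionProduct (extensionProduct P Q) Q) :=
      monotone_extensionProduct_right _ (monotone_extensionProduct_left _ hQP)
    _ = extensionProduct (extensionProduct P P) (extensionProduct Q Q) := by
      simp only [extensionProduct_assoc]
    _ ≤ extensionProduct P (extensionProduct Q Q) := monotone_extensionProduct_left _ hP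
    _ ≤ extensionProduct P Q := monotone_extensionProduct_right _ hQ

end CategoryTheory.ObjectProperty

open ObjectProperty in
theorem star_isPreaisle
    (𝒰 𝒱 : Set 𝒯) (h𝒰 : IsPreaisle 𝒰) (h𝒱 : IsPreaisle 𝒱)
    (hperp : ∀ U ∈ 𝒰, ∀ V ∈ 𝒱, ∀ n : ℤ, ∀ f : U⟦n⟧ ⟶ V, f = 0) :
    IsPreaisle (star 𝒰 𝒱) := by
  have hext {𝒲 : Set 𝒯} (h𝒲 : IsPreaisle 𝒲) :
      extensionProduct (fun X => X ∈ 𝒲) (fun X => X ∈ 𝒲) ≤ fun X => X ∈ 𝒲 :=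
    fun _ ⟨_, _, _, _, _, hT, hA, hB⟩ => h𝒲.2 _ hT hA hB
  have hswap : extensionProduct (fun X => X ∈ 𝒱) (fun X => X ∈ 𝒰) ≤
      extensionProduct (fun X => X ∈ 𝒰) (fun X => X ∈ 𝒱) := by
    refine extensionProduct_le_swap_of_eq_zero fun V U hV hU f => ?_
    rw [← cancel_epi ((shiftFunctorZero 𝒯 ℤ).hom.app U), comp_zero]
    exact hperp U hU _ (h𝒱.1 V hV) 0 _
  constructor
  · rintro X ⟨A, B, f, g, h, hT, hA, hB⟩
    exact ⟨_, _, _, _, _, Triangle.shift_distinguished _ hT 1, h𝒰.1 A hA, h𝒱.1 B hB⟩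
  · intro T hT h₁ h₃
    exact extensionProduct_extensionProduct_self_le (hext h𝒰) (hext h𝒱) hswap _
      ⟨_, _, _, _, _, hT, h₁, h₃⟩
end

section
/- Let 𝒜 be a hereditary abelian category and ℬ a full abelian subcategory of 𝒜 (a full subcategory closed under kernels, cokernels, and extensions), and let D^b(ℬ) denote the full subcategory of D^b(𝒜) of complexes all of whose homologies lie in ℬ. Then D^b(ℬ^⊥) = (D^b ℬ)^⊥ and D^b(⊥ℬ) = ⊥(D^b ℬ), where for subcategories of 𝒜 we set ℬ^⊥ = {A ∈ 𝒜 : Hom(B, A) = 0 and Ext¹(B, A) = 0 for all B ∈ ℬ} (and ⊥ℬ dually), and for a subcategory 𝒮 of D^b(𝒜) we set 𝒮^⊥ = {X : Hom(S, X[n]) = 0 for all S ∈ 𝒮, n ∈ ℤ} (and ⊥𝒮 dually). -/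
/-!
STATEMENT 14: Let 𝒜 be a hereditary abelian category and ℬ a full abelian subcategory of 𝒜
(a full subcategory closed under kernels, cokernels, and extensions), and let D^b(ℬ) denote
the full subcategory of D^b(𝒜) of complexes all of whose homologies lie in ℬ.  Then
D^b(ℬ^⊥) = (D^b ℬ)^⊥ and D^b(⊥ℬ) = ⊥(D^b ℬ), where
ℬ^⊥ = {A ∈ 𝒜 : Hom(B, A) = 0 and Ext¹(B, A) = 0 for all B ∈ ℬ} (and ⊥ℬ dually), and for
a subcategory 𝒮 of D^b(𝒜), 𝒮^⊥ = {X : Hom(S, X[n]) = 0 for all S ∈ 𝒮, n ∈ ℤ}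
(and ⊥𝒮 dually).
-/

open CategoryTheory CategoryTheory.Limits CategoryTheory.Pretriangulated

universe w' w v u

variable {𝒜 : Type u} [Category.{v} 𝒜] [Abelian 𝒜] [HasDerivedCategory.{w} 𝒜]

/-- The `k`-th homology functor, in homological convention: `H_k = H^{-k}`. -/
noncomputable abbrev Hgy (k : ℤ) : DerivedCategory 𝒜 ⥤ 𝒜 :=
  DerivedCategory.homologyFunctor 𝒜 (-k)

/-- `A ↦ A[k]`: the stalk complex concentrated in (homological) degree `k`. -/
noncomputable abbrev single (k : ℤ) : 𝒜 ⥤ DerivedCategory 𝒜 :=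
  DerivedCategory.singleFunctor 𝒜 (-k)

/-- The bounded derived category `D^b(𝒜)`, realized as the full (replete) subcategory of
the derived category consisting of the complexes with bounded homology. -/
def Db : Set (DerivedCategory 𝒜) :=
  {X | ∃ a b : ℤ, ∀ n : ℤ, (n < a ∨ b < n) → IsZero ((Hgy (𝒜 := 𝒜) n).obj X)}

lemma isZero_homology_single (X : 𝒜) (k n : ℤ) (hn : n ≠ k) :
    IsZero ((Hgy (𝒜 := 𝒜) n).obj ((single (𝒜 := 𝒜) k).obj X)) := by
  have e1 : (DerivedCategory.singleFunctor 𝒜 (-k)).obj X ≅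
      DerivedCategory.Q.obj ((CochainComplex.singleFunctor 𝒜 (-k)).obj X) :=
    ((SingleFunctors.evaluation _ _ (-k)).mapIso
      (DerivedCategory.singleFunctorsPostcompQIso 𝒜)).app X
  have e2 := (DerivedCategory.homologyFunctorFactors 𝒜 (-n)).app
    ((CochainComplex.singleFunctor 𝒜 (-k)).obj X)
  refine IsZero.of_iso ?_ ((DerivedCategory.homologyFunctor 𝒜 (-n)).mapIso e1 ≪≫ e2)
  exact HomologicalComplex.isZero_single_obj_homology _ _ _ _ (by omega)

lemma single_mem_Db (X : 𝒜) (k : ℤ) : (single (𝒜 := 𝒜) k).obj X ∈ Db (𝒜 := 𝒜) :=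
  ⟨k, k, fun n hn => isZero_homology_single X k n (by omega)⟩

/-- `D^b(ℬ)`: the full subcategory of `D^b(𝒜)` of complexes all of whose homologies lie
in ℬ. -/
def DbOf (ℬ : Set 𝒜) : Set (DerivedCategory 𝒜) :=
  {X | X ∈ Db (𝒜 := 𝒜) ∧ ∀ k : ℤ, (Hgy (𝒜 := 𝒜) k).obj X ∈ ℬ}

variable [HasExt.{w'} 𝒜]

/-- `ℬ^⊥` in 𝒜. -/
def rightPerpAb (ℬ : Set 𝒜) : Set 𝒜 :=
  {A : 𝒜 | ∀ B ∈ ℬ, (∀ f : B ⟶ A, f = 0) ∧ (∀ e : Abelian.Ext B A 1, e = 0)}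

/-- `⊥ℬ` in 𝒜. -/
def leftPerpAb (ℬ : Set 𝒜) : Set 𝒜 :=
  {A : 𝒜 | ∀ B ∈ ℬ, (∀ f : A ⟶ B, f = 0) ∧ (∀ e : Abelian.Ext A B 1, e = 0)}

/-- `𝒮^⊥` in `D^b(𝒜)`. -/
def rightPerpDb (𝒮 : Set (DerivedCategory 𝒜)) : Set (DerivedCategory 𝒜) :=
  {X | X ∈ Db (𝒜 := 𝒜) ∧ ∀ S ∈ 𝒮, ∀ n : ℤ, ∀ f : S ⟶ X⟦n⟧, f = 0}

/-- `⊥𝒮` in `D^b(𝒜)`. -/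
def leftPerpDb (𝒮 : Set (DerivedCategory 𝒜)) : Set (DerivedCategory 𝒜) :=
  {X | X ∈ Db (𝒜 := 𝒜) ∧ ∀ S ∈ 𝒮, ∀ n : ℤ, ∀ f : X⟦n⟧ ⟶ S, f = 0}

section

open DerivedCategory

/-- There are no nonzero morphisms from `X` to `Y`. -/
def HomVanish {C : Type*} [Category* C] [HasZeroMorphisms C] (X Y : C) : Prop :=
  ∀ f : X ⟶ Y, f = 0

namespace HomVanish

section

variable {C : Type*} [Category* C] [HasZeroMorphisms C] {X X' Y Y' : C}

lemma of_iso (h : HomVanish X Y) (e : X' ≅ X) (e' : Y' ≅ Y) : HomVanish X' Y' := fun f => by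
  rw [← cancel_epi e.inv, ← cancel_mono e'.hom, h ((e.inv ≫ f) ≫ e'.hom), comp_zero, zero_comp]

lemma of_isZero_left (h : IsZero X) : HomVanish X Y := fun f => h.eq_of_src f 0

lemma of_isZero_right (h : IsZero Y) : HomVanish X Y := fun f => h.eq_of_tgt f 0

end

variable {C : Type*} [Category* C] [Preadditive C] [HasShift C ℤ]
  [∀ n : ℤ, (shiftFunctor C n).Additive] {X Y : C}

lemma of_shift (n : ℤ) (h : HomVanish (X⟦n⟧) (Y⟦n⟧)) : HomVanish X Y := fun f =>
  (shiftFunctor C n).map_injective (by rw [h (f⟦n⟧'), Functor.map_zero])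

lemma shift (h : HomVanish X Y) (n : ℤ) : HomVanish (X⟦n⟧) (Y⟦n⟧) := fun f => by
  obtain ⟨g, rfl⟩ := (shiftFunctor C n).map_surjective f
  rw [h g, Functor.map_zero]

variable [HasZeroObject C] [Pretriangulated C]

lemma to_obj₂ {T : Triangle C} (hT : T ∈ distTriang C) (h₁ : HomVanish X T.obj₁)
    (h₃ : HomVanish X T.obj₃) : HomVanish X T.obj₂ := fun f => by
  obtain ⟨g, rfl⟩ := T.coyoneda_exact₂ hT f (h₃ _)
  rw [h₁ g, zero_comp]

lemma from_obj₂ {T : Triangle C} (hT : T ∈ distTriang C) (h₁ : HomVanish T.obj₁ Y)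
    (h₃ : HomVanish T.obj₃ Y) : HomVanish T.obj₂ Y := fun f => by
  obtain ⟨g, rfl⟩ := T.yoneda_exact₂ hT f (h₁ _)
  rw [h₃ g, comp_zero]

end HomVanish

section

variable {C : Type*} [Category* C] [Abelian C]

lemma IsWide.mem_of_isZero {ℬ : Set C} (hℬ : IsWide ℬ) {B Z : C} (hB : B ∈ ℬ)
    (hZ : IsZero Z) : Z ∈ ℬ :=
  hℬ.1 (hℬ.2.1 (𝟙 B) hB hB) ((isZero_kernel_of_mono (𝟙 B)).iso hZ)

variable [HasDerivedCategory C]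

/-! ### Truncations and dévissage -/

/-- Both truncations of `X` at `k`, together with the comparison of homology. -/
lemma exists_truncation_triangle (X : DerivedCategory C) (k : ℤ) :
    ∃ T ∈ distTriang (DerivedCategory C), T.obj₂ = X ∧ T.obj₁.IsLE k ∧ T.obj₃.IsGE (k + 1) ∧
      (∀ i ≤ k, Nonempty ((homologyFunctor C i).obj T.obj₁ ≅ (homologyFunctor C i).obj X)) ∧
      (∀ i, k < i →
        Nonempty ((homologyFunctor C i).obj T.obj₃ ≅ (homologyFunctor C i).obj X)) := by
  obtain ⟨A, D, hA, hD, f, g, h, hT⟩ := TStructure.t.exists_triangle X k (k + 1) rfl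
  have hA : A.IsLE k := ⟨hA⟩
  have hD : D.IsGE (k + 1) := ⟨hD⟩
  refine ⟨_, hT, rfl, hA, hD, fun i hi => ?_, fun i hi => ?_⟩
  · have : Mono ((homologyFunctor C i).map f) :=
      (HomologySequence.mono_homologyMap_mor₁_iff _ hT (i - 1) i (by lia)).2
      ((isZero_of_isGE D (k + 1) (i - 1) (by lia)).eq_of_src _ _)
    have : Epi ((homologyFunctor C i).map f) :=
      (HomologySequence.epi_homologyMap_mor₁_iff _ hT i).2
      ((isZero_of_isGE D (k + 1) i (by lia)).eq_of_tgt _ _)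
    have : IsIso ((homologyFunctor C i).map f) := isIso_of_mono_of_epi _
    have e := asIso ((homologyFunctor C i).map f)
    exact ⟨e⟩
  · have : Mono ((homologyFunctor C i).map g) :=
      (HomologySequence.mono_homologyMap_mor₂_iff _ hT i).2
      ((isZero_of_isLE A k i (by lia)).eq_of_src _ _)
    have : Epi ((homologyFunctor C i).map g) :=
      (HomologySequence.epi_homologyMap_mor₂_iff _ hT i (i + 1)).2
      ((isZero_of_isLE A k (i + 1) (by lia)).eq_of_tgt _ _)
    have : IsIso ((homologyFunctor C i).map g) := isIso_of_mono_of_epi _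
    have e := asIso ((homologyFunctor C i).map g)
    exact ⟨e.symm⟩

lemma nonempty_iso_single_homology (X : DerivedCategory C) (n : ℤ) [X.IsGE n] [X.IsLE n] :
    Nonempty (X ≅ (singleFunctor C n).obj ((homologyFunctor C n).obj X)) := by
  obtain ⟨Y, ⟨e⟩⟩ := exists_iso_singleFunctor_obj_of_isGE_of_isLE X n
  exact ⟨e ≪≫ (singleFunctor C n).mapIso ((singleFunctorCompHomologyFunctorIso C n).symm.app Y ≪≫
    (homologyFunctor C n).mapIso e.symm)⟩

lemma isGE_of_homology_iso {X Y : DerivedCategory C} {a k : ℤ} [X.IsGE a] [Y.IsLE k]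
    (e : ∀ i ≤ k, Nonempty ((homologyFunctor C i).obj Y ≅ (homologyFunctor C i).obj X)) :
    Y.IsGE a := by
  rw [isGE_iff]
  intro i hi
  by_cases hik : i ≤ k
  · exact (isZero_of_isGE X a i hi).of_iso (e i hik).some
  · exact isZero_of_isLE Y k i (by lia)

lemma isLE_of_homology_iso {X Y : DerivedCategory C} {b k : ℤ} [X.IsLE b] [Y.IsGE (k + 1)]
    (e : ∀ i, k < i → Nonempty ((homologyFunctor C i).obj Y ≅ (homologyFunctor C i).obj X)) :
    Y.IsLE b := by
  rw [isLE_iff]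
  intro i hi
  by_cases hik : k < i
  · exact (isZero_of_isLE X b i hi).of_iso (e i hik).some
  · exact isZero_of_isGE Y (k + 1) i (by lia)

/-- Dévissage: a property of objects which is closed under isomorphisms and extensions holds
for a bounded complex as soon as it holds for its shifted homology objects. -/
lemma bounded_devissage (P : DerivedCategory C → Prop)
    (iso : ∀ {X Y : DerivedCategory C}, (X ≅ Y) → P Y → P X)
    (zero : ∀ X : DerivedCategory C, IsZero X → P X)
    (ext₂ : ∀ T ∈ distTriang (DerivedCategory C), P T.obj₁ → P T.obj₃ → P T.obj₂)
    (X : DerivedCategory C) (a b : ℤ) [X.IsGE a] [X.IsLE b]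
    (hX : ∀ i, P ((singleFunctor C i).obj ((homologyFunctor C i).obj X))) : P X := by
  obtain ⟨n, hn⟩ : ∃ n : ℕ, b < a + n := ⟨(b - a + 1).toNat, by lia⟩
  induction n generalizing X a with
  | zero => exact zero X (TStructure.t.isZero X b a (by lia))
  | succ n ih =>
    obtain ⟨T, hT, rfl, h₁, h₃, e₁, e₃⟩ := exists_truncation_triangle X a
    have := isGE_of_homology_iso (a := a) e₁
    have := isLE_of_homology_iso (b := b) e₃
    refine ext₂ T hT ?_ ?_
    · obtain ⟨e⟩ := nonempty_iso_single_homology T.obj₁ a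
      exact iso (e ≪≫ (singleFunctor C a).mapIso (e₁ a le_rfl).some) (hX a)
    · refine ih T.obj₃ (a + 1) (fun i => ?_) (by push_cast at hn; lia)
      by_cases hi : a < i
      · exact iso ((singleFunctor C i).mapIso (e₃ i hi).some) (hX i)
      · exact zero _ ((singleFunctor C i).map_isZero
          (isZero_of_isGE T.obj₃ (a + 1) i (by lia)))

namespace HomVanish

lemma devissage_right (S X : DerivedCategory C) (a b : ℤ) [X.IsGE a] [X.IsLE b]
    (hX : ∀ i, HomVanish S ((singleFunctor C i).obj ((homologyFunctor C i).obj X))) :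
    HomVanish S X :=
  bounded_devissage (HomVanish S) (fun e h => h.of_iso (Iso.refl _) e)
    (fun _ => of_isZero_right) (fun _ => to_obj₂) X a b hX

lemma devissage_left (S X : DerivedCategory C) (a b : ℤ) [X.IsGE a] [X.IsLE b]
    (hX : ∀ i, HomVanish ((singleFunctor C i).obj ((homologyFunctor C i).obj X)) S) :
    HomVanish X S :=
  bounded_devissage (HomVanish · S) (fun e h => h.of_iso e (Iso.refl _))
    (fun _ => of_isZero_left) (fun _ => from_obj₂) X a b hX

/-! ### Morphisms between stalk complexes -/

lemma single_shift {A B : C} {a b a' b' : ℤ}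
    (h : HomVanish ((singleFunctor C a).obj A) ((singleFunctor C b).obj B))
    (hab : a - b = a' - b') :
    HomVanish ((singleFunctor C a').obj A) ((singleFunctor C b').obj B) :=
  of_shift (a' - a) (h.of_iso
    (((singleFunctors C).shiftIso (a' - a) a a' (by lia)).app A)
    (((singleFunctors C).shiftIso (a' - a) b b' (by lia)).app B))

lemma single_of_lt (A B : C) {a b : ℤ} (hab : a < b) :
    HomVanish ((singleFunctor C a).obj A) ((singleFunctor C b).obj B) :=
  fun f => TStructure.t.zero f a b hab

end HomVanish

lemma homVanish_single_iff_hom (A B : C) (a : ℤ) :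
    HomVanish ((singleFunctor C a).obj A) ((singleFunctor C a).obj B) ↔ HomVanish A B :=
  ⟨fun h f => (singleFunctor C a).map_injective
      (by rw [h ((singleFunctor C a).map f), Functor.map_zero]), fun h f => by
    obtain ⟨g, rfl⟩ := (singleFunctor C a).map_surjective f
    rw [h g, Functor.map_zero]⟩

/-- Morphisms of positive degree between stalk complexes are effaceable by an epimorphism. -/
lemma exists_epi_single_map_comp_eq_zero {A B : C} {a b : ℤ} (hab : b < a)
    (f : (singleFunctor C a).obj A ⟶ (singleFunctor C b).obj B) :
    ∃ (P : C) (p : P ⟶ A), Epi p ∧ (singleFunctor C a).map p ≫ f = 0 := by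
  change Q.obj ((CochainComplex.singleFunctor C a).obj A) ⟶
    Q.obj ((CochainComplex.singleFunctor C b).obj B) at f
  obtain ⟨Z, _, s, _, g, rfl⟩ := right_fac_of_isStrictlyLE f a
  let i : (CochainComplex.singleFunctor C a).obj (Z.X a) ⟶ Z :=
    HomologicalComplex.mkHomFromSingle (𝟙 (Z.X a)) (fun k hk =>
      (Z.isZero_of_isStrictlyLE a k (by simp at hk; lia)).eq_of_tgt _ _)
  obtain ⟨p, hp⟩ := (CochainComplex.singleFunctor C a).map_surjective (i ≫ s)
  refine ⟨Z.X a, p, Preadditive.epi_of_cancel_zero _ (fun {W} h hh => ?_), ?_⟩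
  · have hs : s ≫ (CochainComplex.singleFunctor C a).map h = 0 := by
      have h₀ : i ≫ s ≫ (CochainComplex.singleFunctor C a).map h = 0 := by
        rw [← Category.assoc, ← hp, ← Functor.map_comp, hh, Functor.map_zero]
      apply HomologicalComplex.to_single_hom_ext
      have h₁ := HomologicalComplex.congr_hom h₀ a
      rw [HomologicalComplex.comp_f, HomologicalComplex.mkHomFromSingle_f, Category.comp_id] at h₁
      rw [← cancel_epi (HomologicalComplex.singleObjXSelf (ComplexShape.up ℤ) a (Z.X a)).hom]
      exact h₁.trans comp_zero.symm
    apply (singleFunctor C a).map_injective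
    rw [Functor.map_zero]
    change Q.map ((CochainComplex.singleFunctor C a).map h) = 0
    rw [← cancel_epi (Q.map s), ← Functor.map_comp, hs, Functor.map_zero, comp_zero]
  · change Q.map ((CochainComplex.singleFunctor C a).map p) ≫ inv (Q.map s) ≫ Q.map g =
      (0 : Q.obj _ ⟶ Q.obj ((CochainComplex.singleFunctor C b).obj B))
    rw [hp, Functor.map_comp, Category.assoc, IsIso.hom_inv_id_assoc, ← Functor.map_comp]
    have : i ≫ g = 0 := HomologicalComplex.from_single_hom_ext
      ((HomologicalComplex.isZero_single_obj_X (ComplexShape.up ℤ) b B a (by lia)).eq_of_tgt _ _)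
    rw [this, Functor.map_zero]

lemma exists_isGE_isLE_of_mem_Db {X : DerivedCategory C} (hX : X ∈ Db (𝒜 := C)) :
    ∃ a b : ℤ, X.IsGE a ∧ X.IsLE b := by
  obtain ⟨a, b, h⟩ := hX
  refine ⟨-b, -a, (isGE_iff X _).2 fun i hi => ?_, (isLE_iff X _).2 fun i hi => ?_⟩
  · simpa only [Hgy, neg_neg] using h (-i) (by lia)
  · simpa only [Hgy, neg_neg] using h (-i) (by lia)

lemma homology_mem_of_mem_DbOf {ℬ : Set C} {X : DerivedCategory C} (hX : X ∈ DbOf ℬ) (i : ℤ) :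
    (homologyFunctor C i).obj X ∈ ℬ := by
  simpa only [Hgy, neg_neg] using hX.2 (-i)

lemma IsWide.single_mem_DbOf {ℬ : Set C} (hℬ : IsWide ℬ) {B : C} (hB : B ∈ ℬ) (m : ℤ) :
    (singleFunctor C m).obj B ∈ DbOf ℬ := by
  obtain ⟨k, rfl⟩ : ∃ k, m = -k := ⟨-m, by simp⟩
  refine ⟨single_mem_Db B k, fun n => ?_⟩
  by_cases hn : n = k
  · subst hn
    exact hℬ.1 hB ((singleFunctorCompHomologyFunctorIso C (-n)).symm.app B)
  · exact hℬ.mem_of_isZero hB (isZero_homology_single B k n hn)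

end

lemma homVanish_single_iff_ext (A B : 𝒜) (a b : ℤ) (n : ℕ) (hn : a = b + n) :
    HomVanish ((singleFunctor 𝒜 a).obj A) ((singleFunctor 𝒜 b).obj B) ↔
      ∀ e : Abelian.Ext A B n, e = 0 := by
  let i : ((singleFunctor 𝒜 0).obj B)⟦(n : ℤ)⟧ ≅ (singleFunctor 𝒜 (-n)).obj B :=
    ((singleFunctors 𝒜).shiftIso (n : ℤ) (-n) 0 (by lia)).app B
  have key : HomVanish ((singleFunctor 𝒜 0).obj A) (((singleFunctor 𝒜 0).obj B)⟦(n : ℤ)⟧) ↔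
      ∀ e : Abelian.Ext A B n, e = 0 :=
    ⟨fun h e => Abelian.Ext.ext (by rw [Abelian.Ext.zero_hom]; exact h _), fun h f => by
      obtain ⟨e, rfl⟩ := (Abelian.Ext.homEquiv (X := A) (Y := B) (n := n)).surjective f
      rw [h e]
      exact Abelian.Ext.zero_hom ..⟩
  rw [← key]
  exact ⟨fun h => (h.single_shift (by lia)).of_iso (Iso.refl _) i,
    fun h => (h.of_iso (Iso.refl _) i.symm).single_shift (by lia)⟩

namespace Hereditary

lemma homVanish_single (hher : Hereditary (𝒜 := 𝒜)) (A B : 𝒜) {a b : ℤ} (hab : b + 2 ≤ a) :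
    HomVanish ((singleFunctor 𝒜 a).obj A) ((singleFunctor 𝒜 b).obj B) := by
  obtain ⟨n, hn⟩ : ∃ n : ℕ, a = b + 2 + n := ⟨(a - b - 2).toNat, by lia⟩
  suffices h : HomVanish ((singleFunctor 𝒜 0).obj A) ((singleFunctor 𝒜 (-2 - n)).obj B) from
    h.single_shift (by lia)
  clear hn hab
  induction n generalizing A with
  | zero => exact (homVanish_single_iff_ext A B _ _ 2 (by simp)).2 (@hher A B)
  | succ n ih =>
    intro f
    obtain ⟨P, p, _, hp⟩ := exists_epi_single_map_comp_eq_zero (by push_cast; lia) f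
    have hS : (ShortComplex.mk (kernel.ι p) p (kernel.condition p)).ShortExact :=
      { exact := ShortComplex.exact_kernel p }
    obtain ⟨g, rfl⟩ := hS.singleTriangle.yoneda_exact₃ hS.singleTriangle_distinguished f hp
    have hg : HomVanish (((singleFunctor 𝒜 0).obj (kernel p))⟦(1 : ℤ)⟧)
        ((singleFunctor 𝒜 (-2 - (n + 1 : ℕ))).obj B) :=
      ((ih (kernel p)).shift 1).of_iso (Iso.refl _)
        (((singleFunctors 𝒜).shiftIso 1 (-2 - (n + 1 : ℕ)) (-2 - n) (by push_cast; lia)).app B).symm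
    obtain rfl : g = 0 := hg g
    exact comp_zero

lemma homVanish (hher : Hereditary (𝒜 := 𝒜)) (X Y : DerivedCategory 𝒜) (a b c d : ℤ)
    [X.IsGE a] [X.IsLE b] [Y.IsGE c] [Y.IsLE d] (h : d + 2 ≤ a) : HomVanish X Y := by
  refine .devissage_left _ _ a b fun i => .devissage_right _ _ c d fun j => ?_
  by_cases hi : i < a
  · exact .of_isZero_left ((singleFunctor 𝒜 i).map_isZero (isZero_of_isGE X a i hi))
  by_cases hj : d < j
  · exact .of_isZero_right ((singleFunctor 𝒜 j).map_isZero (isZero_of_isLE Y d j hj))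
  exact hher.homVanish_single _ _ (by lia)

/-- Over a hereditary category, every complex receiving no maps from `B[-m]` for
`m = k, k + 1` has its `k`-th cohomology right orthogonal to `B`. -/
lemma homVanish_single_homology (hher : Hereditary (𝒜 := 𝒜)) (B : 𝒜) (X : DerivedCategory 𝒜)
    (a b : ℤ) [X.IsGE a] [X.IsLE b] {k m : ℤ} (hm : k ≤ m) (hm' : m ≤ k + 1)
    (h : HomVanish ((singleFunctor 𝒜 m).obj B) X) :
    HomVanish ((singleFunctor 𝒜 m).obj B)
      ((singleFunctor 𝒜 k).obj ((homologyFunctor 𝒜 k).obj X)) := by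
  obtain ⟨T, hT, rfl, _, _, e₁, -⟩ := exists_truncation_triangle X k
  obtain ⟨T', hT', hTT', _, h₃, e₁', e₃'⟩ := exists_truncation_triangle T.obj₁ (k - 1)
  rw [sub_add_cancel] at h₃
  have := isGE_of_homology_iso (a := a) e₁
  have := isGE_of_homology_iso (a := a) e₁'
  have : T'.obj₃.IsGE (k - 1 + 1) := by rwa [sub_add_cancel]
  have := isLE_of_homology_iso (b := k) e₃'
  obtain ⟨e⟩ := nonempty_iso_single_homology T'.obj₃ k
  suffices h : HomVanish ((singleFunctor 𝒜 m).obj B) T'.obj₃ from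
    h.of_iso (Iso.refl _) ((singleFunctor 𝒜 k).mapIso
      ((e₃' k (by lia)).some ≪≫ (e₁ k le_rfl).some).symm ≪≫ e.symm)
  refine HomVanish.to_obj₂ (rot_of_distTriang _ hT') ?_ ?_
  · change HomVanish _ T'.obj₂
    rw [hTT']
    refine HomVanish.to_obj₂ (inv_rot_of_distTriang _ hT) (fun f => ?_) h
    have : (T.obj₃⟦(-1 : ℤ)⟧).IsGE (k + 2) := TStructure.t.isGE_shift T.obj₃ (k + 1) (-1) (k + 2)
    exact TStructure.t.zero (Y := T.obj₃⟦(-1 : ℤ)⟧) f m (k + 2)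
  · have : (T'.obj₁⟦(1 : ℤ)⟧).IsLE (k - 2) := TStructure.t.isLE_shift T'.obj₁ (k - 1) 1 (k - 2)
    have : (T'.obj₁⟦(1 : ℤ)⟧).IsGE (a - 1) := TStructure.t.isGE_shift T'.obj₁ a 1 (a - 1)
    exact hher.homVanish _ (T'.obj₁⟦(1 : ℤ)⟧) m m (a - 1) (k - 2) (by lia)

/-- Over a hereditary category, every complex with no maps to `B[-m]` for
`m = k, k - 1` has its `k`-th cohomology left orthogonal to `B`. -/
lemma homVanish_homology_single (hher : Hereditary (𝒜 := 𝒜)) (B : 𝒜) (X : DerivedCategory 𝒜)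
    (a b : ℤ) [X.IsGE a] [X.IsLE b] {k m : ℤ} (hm : m ≤ k) (hm' : k ≤ m + 1)
    (h : HomVanish X ((singleFunctor 𝒜 m).obj B)) :
    HomVanish ((singleFunctor 𝒜 k).obj ((homologyFunctor 𝒜 k).obj X))
      ((singleFunctor 𝒜 m).obj B) := by
  obtain ⟨T, hT, rfl, _, h₃, -, e₃⟩ := exists_truncation_triangle X (k - 1)
  obtain ⟨T', hT', hTT', _, _, e₁', e₃'⟩ := exists_truncation_triangle T.obj₃ k
  have := isLE_of_homology_iso (b := b) e₃
  have := isLE_of_homology_iso (b := b) e₃'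
  rw [sub_add_cancel] at h₃
  have := isGE_of_homology_iso (a := k) e₁'
  obtain ⟨e⟩ := nonempty_iso_single_homology T'.obj₁ k
  suffices h : HomVanish T'.obj₁ ((singleFunctor 𝒜 m).obj B) from
    h.of_iso ((singleFunctor 𝒜 k).mapIso
      ((e₁' k le_rfl).some ≪≫ (e₃ k (by lia)).some).symm ≪≫ e.symm) (Iso.refl _)
  refine HomVanish.from_obj₂ (inv_rot_of_distTriang _ hT') ?_ ?_
  · have : (T'.obj₃⟦(-1 : ℤ)⟧).IsGE (k + 2) := TStructure.t.isGE_shift T'.obj₃ (k + 1) (-1) (k + 2)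
    have : (T'.obj₃⟦(-1 : ℤ)⟧).IsLE (b + 1) := TStructure.t.isLE_shift T'.obj₃ b (-1) (b + 1)
    exact hher.homVanish (T'.obj₃⟦(-1 : ℤ)⟧) _ (k + 2) (b + 1) m m (by lia)
  · change HomVanish T'.obj₂ _
    rw [hTT']
    refine HomVanish.from_obj₂ (rot_of_distTriang _ hT) h (fun f => ?_)
    have : (T.obj₁⟦(1 : ℤ)⟧).IsLE (k - 2) := TStructure.t.isLE_shift T.obj₁ (k - 1) 1 (k - 2)
    exact TStructure.t.zero (X := T.obj₁⟦(1 : ℤ)⟧) f (k - 2) m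

/-- If `B` is orthogonal to `A` in degrees `0` and `1`, so are all their shifts. -/
lemma homVanish_single_of_hom_of_ext (hher : Hereditary (𝒜 := 𝒜)) {A B : 𝒜}
    (h₀ : ∀ f : A ⟶ B, f = 0) (h₁ : ∀ e : Abelian.Ext A B 1, e = 0) (a b : ℤ) :
    HomVanish ((singleFunctor 𝒜 a).obj A) ((singleFunctor 𝒜 b).obj B) := by
  rcases lt_or_ge a b with h | h
  · exact .single_of_lt A B h
  rcases h.eq_or_lt with rfl | h
  · exact (homVanish_single_iff_hom A B _).2 h₀
  rcases (Int.add_one_le_iff.2 h).eq_or_lt with rfl | h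
  · exact (homVanish_single_iff_ext A B _ _ 1 (by simp)).2 h₁
  · exact hher.homVanish_single A B (by lia)

/-- If all homologies of two bounded complexes are orthogonal in degrees `0` and `1`, the
complexes are orthogonal in all degrees. -/
lemma homVanish_shift_of_homology (hher : Hereditary (𝒜 := 𝒜)) {X Y : DerivedCategory 𝒜}
    (a b c d : ℤ) [X.IsGE a] [X.IsLE b] [Y.IsGE c] [Y.IsLE d]
    (h : ∀ i j, (∀ f : (homologyFunctor 𝒜 i).obj X ⟶ (homologyFunctor 𝒜 j).obj Y, f = 0) ∧
      ∀ e : Abelian.Ext ((homologyFunctor 𝒜 i).obj X) ((homologyFunctor 𝒜 j).obj Y) 1, e = 0)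
    (n : ℤ) : HomVanish (X⟦n⟧) Y := by
  refine .devissage_right _ _ c d fun j => ?_
  refine .of_shift (-n) (.of_iso ?_ ((shiftEquiv _ n).unitIso.symm.app X)
    (((singleFunctors 𝒜).shiftIso (-n) (j + n) j (by lia)).app _))
  exact .devissage_left _ X a b fun i =>
    hher.homVanish_single_of_hom_of_ext (h i j).1 (h i j).2 _ _

end Hereditary

end

theorem derived_perpendicular_of_wide
    (hher : Hereditary (𝒜 := 𝒜)) (ℬ : Set 𝒜) (hℬ : IsWide ℬ) :
    DbOf (rightPerpAb ℬ) = rightPerpDb (DbOf ℬ) ∧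
    DbOf (leftPerpAb ℬ) = leftPerpDb (DbOf ℬ) := by
  constructor <;> ext X <;> constructor
  · intro hX
    refine ⟨hX.1, fun S hS n f => ?_⟩
    obtain ⟨a, b, _, _⟩ := exists_isGE_isLE_of_mem_Db hX.1
    obtain ⟨c, d, _, _⟩ := exists_isGE_isLE_of_mem_Db hS.1
    have h : HomVanish (S⟦-n⟧) X := hher.homVanish_shift_of_homology c d a b (fun i j =>
      homology_mem_of_mem_DbOf hX j _ (homology_mem_of_mem_DbOf hS i)) (-n)
    exact (h.shift n).of_iso ((shiftEquiv _ n).counitIso.symm.app S) (Iso.refl _) f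
  · intro hX
    obtain ⟨a, b, _, _⟩ := exists_isGE_isLE_of_mem_Db hX.1
    refine ⟨hX.1, fun k B hB => ?_⟩
    have h (m : ℤ) : HomVanish ((DerivedCategory.singleFunctor 𝒜 m).obj B) X :=
      HomVanish.of_iso (hX.2 _ (hℬ.single_mem_DbOf hB m) 0) (Iso.refl _)
        ((shiftFunctorZero _ ℤ).symm.app X)
    exact ⟨(homVanish_single_iff_hom _ _ (-k)).1
        (hher.homVanish_single_homology B X a b le_rfl (by lia) (h _)),
      (homVanish_single_iff_ext _ _ (-k + 1) (-k) 1 (by simp)).1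
        (hher.homVanish_single_homology B X a b (by lia) le_rfl (h _))⟩
  · intro hX
    refine ⟨hX.1, fun S hS n => ?_⟩
    obtain ⟨a, b, _, _⟩ := exists_isGE_isLE_of_mem_Db hX.1
    obtain ⟨c, d, _, _⟩ := exists_isGE_isLE_of_mem_Db hS.1
    exact hher.homVanish_shift_of_homology a b c d (fun i j =>
      homology_mem_of_mem_DbOf hX i _ (homology_mem_of_mem_DbOf hS j)) n
  · intro hX
    obtain ⟨a, b, _, _⟩ := exists_isGE_isLE_of_mem_Db hX.1
    refine ⟨hX.1, fun k B hB => ?_⟩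
    have h (m : ℤ) : HomVanish X ((DerivedCategory.singleFunctor 𝒜 m).obj B) :=
      HomVanish.of_iso (hX.2 _ (hℬ.single_mem_DbOf hB m) 0)
        ((shiftFunctorZero _ ℤ).symm.app X) (Iso.refl _)
    exact ⟨(homVanish_single_iff_hom _ _ (-k)).1
        (hher.homVanish_homology_single B X a b le_rfl (by lia) (h _)),
      (homVanish_single_iff_ext _ _ (-k) (-k - 1) 1 (by simp)).1
        (hher.homVanish_homology_single B X a b (by lia) (by lia) (h _))⟩
end
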